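/- arXiv:2306.07891 — 2 statements merged into one kernel-verified Lean document; each statement's English description precedes it below -/
import Mathlib

section
/- Fix c > 0. Then the expected maximum matching size satisfies lim_{N→∞} E[m*(c,N)] / N = c / (c + 1/2). -/
open MeasureTheory

/-- The maximum matching size between the points `X 0, …, X (k-1)` and
`Y 0, …, Y (k'-1)` with threshold `r`: the largest `j` for which there are
injections `σ, τ` with `|X (σ i) - Y (τ i)| < r` for all `i`. -/
noncomputable def mmSize (r : ℝ) {k k' : ℕ} (X : Fin k → ℝ) (Y : Fin k' → ℝ) : ℕ :=
  sSup {j : ℕ | ∃ σ : Fin j → Fin k, ∃ τ : Fin j → Fin k',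
    Function.Injective σ ∧ Function.Injective τ ∧ ∀ i, |X (σ i) - Y (τ i)| < r}

/-- The product of `N` copies of the uniform distribution on `[0,1]`. -/
noncomputable def unifCube (N : ℕ) : Measure (Fin N → ℝ) :=
  Measure.pi fun _ => volume.restrict (Set.Icc 0 1)


def IsM (r : ℕ) (A B : Finset ℕ) (P : Finset (ℕ × ℕ)) : Prop :=
  (∀ e ∈ P, e.1 ∈ A ∧ e.2 ∈ B ∧ e.1 ≤ e.2 + r ∧ e.2 ≤ e.1 + r) ∧
  (∀ e ∈ P, ∀ f ∈ P, e.1 = f.1 → e = f) ∧ (∀ e ∈ P, ∀ f ∈ P, e.2 = f.2 → e = f)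

noncomputable def MM (r : ℕ) (A B : Finset ℕ) : ℕ :=
  sSup {j : ℕ | ∃ P, IsM r A B P ∧ P.card = j}

theorem IsM.card_le_left {r : ℕ} {A B : Finset ℕ} {P : Finset (ℕ × ℕ)} (h : IsM r A B P) :
    P.card ≤ A.card :=
  Finset.card_le_card_of_injOn Prod.fst (fun e he => (h.1 e he).1)
    (fun e he f hf hef => h.2.1 e he f hf hef)

theorem MM_bdd (r : ℕ) (A B : Finset ℕ) : BddAbove {j : ℕ | ∃ P, IsM r A B P ∧ P.card = j} :=
  ⟨A.card, by rintro j ⟨P, hP, rfl⟩; exact hP.card_le_left⟩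

theorem IsM.card_le {r : ℕ} {A B : Finset ℕ} {P : Finset (ℕ × ℕ)} (h : IsM r A B P) :
    P.card ≤ MM r A B := le_csSup (MM_bdd r A B) ⟨P, h, rfl⟩

theorem MM_exists (r : ℕ) (A B : Finset ℕ) : ∃ P, IsM r A B P ∧ P.card = MM r A B := by
  have : MM r A B ∈ {j : ℕ | ∃ P, IsM r A B P ∧ P.card = j} :=
    Nat.sSup_mem ⟨0, ∅, by simp [IsM], rfl⟩ (MM_bdd r A B)
  exact this

theorem MM_le_left (r : ℕ) (A B : Finset ℕ) : MM r A B ≤ A.card := by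
  obtain ⟨P, hP, h⟩ := MM_exists r A B
  exact h ▸ hP.card_le_left

theorem IsM.swap {r : ℕ} {A B : Finset ℕ} {P : Finset (ℕ × ℕ)} (h : IsM r A B P) :
    IsM r B A (P.map (Equiv.prodComm ℕ ℕ).toEmbedding) := by
  obtain ⟨h1, h2, h3⟩ := h
  refine ⟨?_, ?_, ?_⟩
  · intro e he
    simp only [Finset.mem_map_equiv] at he
    have := h1 _ he
    simp at this
    tauto
  · intro e he f hf hef
    simp only [Finset.mem_map_equiv] at he hf
    exact (Equiv.prodComm ℕ ℕ).symm.injective (h3 _ he _ hf (by simpa using hef))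
  · intro e he f hf hef
    simp only [Finset.mem_map_equiv] at he hf
    exact (Equiv.prodComm ℕ ℕ).symm.injective (h2 _ he _ hf (by simpa using hef))

theorem MM_comm (r : ℕ) (A B : Finset ℕ) : MM r A B = MM r B A := by
  have key : ∀ A B, MM r A B ≤ MM r B A := by
    intro A B
    obtain ⟨P, hP, h⟩ := MM_exists r A B
    rw [← h, ← Finset.card_map (Equiv.prodComm ℕ ℕ).toEmbedding]
    exact hP.swap.card_le
  exact le_antisymm (key _ _) (key _ _)

theorem IsM.sub {r : ℕ} {A B A' B' : Finset ℕ} {P Q : Finset (ℕ × ℕ)} (h : IsM r A B P)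
    (hQ : Q ⊆ P) (hA : ∀ e ∈ Q, e.1 ∈ A') (hB : ∀ e ∈ Q, e.2 ∈ B') : IsM r A' B' Q :=
  ⟨fun e he => ⟨hA e he, hB e he, (h.1 e (hQ he)).2.2⟩,
    fun e he f hf => h.2.1 e (hQ he) f (hQ hf), fun e he f hf => h.2.2 e (hQ he) f (hQ hf)⟩

theorem MM_mono_left (r : ℕ) {A A' : Finset ℕ} (B : Finset ℕ) (h : A ⊆ A') :
    MM r A B ≤ MM r A' B := by
  obtain ⟨P, hP, hc⟩ := MM_exists r A B
  rw [← hc]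
  exact (hP.sub subset_rfl (fun e he => h (hP.1 e he).1) (fun e he => (hP.1 e he).2.1)).card_le

theorem MM_lip_left (r : ℕ) {A A' : Finset ℕ} (B : Finset ℕ) (h : A ⊆ A') :
    MM r A' B + A.card ≤ MM r A B + A'.card := by
  obtain ⟨P, hP, hc⟩ := MM_exists r A' B
  have h1 : (P.filter (fun e => e.1 ∈ A)).card ≤ MM r A B :=
    (hP.sub (Finset.filter_subset _ _) (fun e he => (Finset.mem_filter.1 he).2)
      (fun e he => (hP.1 e (Finset.mem_filter.1 he).1).2.1)).card_le
  have h2 : (P.filter (fun e => ¬ e.1 ∈ A)).card ≤ (A' \ A).card :=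
    Finset.card_le_card_of_injOn Prod.fst
      (fun e he => by
        have he := Finset.mem_filter.1 he
        simpa using ⟨(hP.1 e he.1).1, he.2⟩)
      (fun e he f hf hef => hP.2.1 e (Finset.mem_filter.1 he).1 f (Finset.mem_filter.1 hf).1 hef)
  have h3 := Finset.card_filter_add_card_filter_not (s := P) (fun e => e.1 ∈ A)
  have h4 := Finset.card_sdiff_add_card_eq_card h
  omega

theorem MM_far (r : ℕ) {A B : Finset ℕ} {x : ℕ} (h : ∀ b ∈ B, b + r < x) :
    MM r (insert x A) B = MM r A B := by
  apply le_antisymm _ (MM_mono_left r B (Finset.subset_insert _ _))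
  obtain ⟨P, hP, hc⟩ := MM_exists r (insert x A) B
  rw [← hc]
  refine (hP.sub subset_rfl (fun e he => ?_) (fun e he => (hP.1 e he).2.1)).card_le
  obtain ⟨h1, h2, h3, h4⟩ := hP.1 e he
  have := h _ h2
  rcases Finset.mem_insert.1 h1 with h5 | h5
  · omega
  · exact h5

theorem MM_top (r : ℕ) {A B : Finset ℕ} {x y : ℕ} (hA : ∀ a ∈ A, a < x) (hB : ∀ b ∈ B, b < y)
    (hxy : x ≤ y + r) (hyx : y ≤ x + r) :
    MM r (insert x A) (insert y B) = MM r A B + 1 := by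
  apply le_antisymm
  · obtain ⟨P, hP, hc⟩ := MM_exists r (insert x A) (insert y B)
    rw [← hc]
    by_cases hx : ∃ b, (x, b) ∈ P
    · obtain ⟨b, hb⟩ := hx
      by_cases hy : ∃ a, (a, y) ∈ P.erase (x, b)
      · obtain ⟨a, ha⟩ := hy
        have ha' := Finset.mem_of_mem_erase ha
        have hne := Finset.ne_of_mem_erase ha
        have hax : a ≠ x := by
          rintro rfl
          exact hne (hP.2.1 _ ha' _ hb rfl)
        have hby : b ≠ y := by
          rintro rfl
          exact hne (hP.2.2 _ ha' _ hb rfl)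
        have haA : a ∈ A := by
          have := (hP.1 _ ha').1
          simp only [Finset.mem_insert] at this
          tauto
        have hbB : b ∈ B := by
          have := (hP.1 _ hb).2.1
          simp only [Finset.mem_insert] at this
          tauto
        have hx1 := hA a haA
        have hy1 := hB b hbB
        have e1 := (hP.1 _ hb).2.2
        have e2 := (hP.1 _ ha').2.2
        simp only at e1 e2
        set Q := (P.erase (x, b)).erase (a, y) with hQ
        have hQP : ∀ e ∈ Q, e ∈ P ∧ e.1 ≠ x ∧ e.2 ≠ b ∧ e.1 ≠ a ∧ e.2 ≠ y := by
          intro e he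
          simp only [hQ, Finset.mem_erase] at he
          obtain ⟨he1, he2, he3⟩ := he
          exact ⟨he3, fun h => he2 (hP.2.1 _ he3 _ hb h), fun h => he2 (hP.2.2 _ he3 _ hb h),
            fun h => he1 (hP.2.1 _ he3 _ ha' h), fun h => he1 (hP.2.2 _ he3 _ ha' h)⟩
        have hnot : (a, b) ∉ Q := fun h => (hQP _ h).2.2.1 rfl
        have hM : IsM r A B (insert (a, b) Q) := by
          refine ⟨?_, ?_, ?_⟩
          · intro e he
            rcases Finset.mem_insert.1 he with rfl | he
            · exact ⟨haA, hbB, by simp only; omega, by simp only; omega⟩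
            · obtain ⟨q1, q2, q3, q4, q5⟩ := hQP e he
              obtain ⟨p1, p2, p3⟩ := hP.1 e q1
              simp only [Finset.mem_insert] at p1 p2
              exact ⟨by tauto, by tauto, p3⟩
          · intro e he f hf hef
            rcases Finset.mem_insert.1 he with rfl | he <;>
            rcases Finset.mem_insert.1 hf with rfl | hf
            · rfl
            · exact absurd hef.symm (hQP f hf).2.2.2.1
            · exact absurd hef (hQP e he).2.2.2.1
            · exact hP.2.1 _ (hQP e he).1 _ (hQP f hf).1 hef
          · intro e he f hf hef
            rcases Finset.mem_insert.1 he with rfl | he <;>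
            rcases Finset.mem_insert.1 hf with rfl | hf
            · rfl
            · exact absurd hef.symm (hQP f hf).2.2.1
            · exact absurd hef (hQP e he).2.2.1
            · exact hP.2.2 _ (hQP e he).1 _ (hQP f hf).1 hef
        have h1 := hM.card_le
        rw [Finset.card_insert_of_notMem hnot] at h1
        have h2 := Finset.card_erase_add_one hb
        have h3 := Finset.card_erase_add_one ha
        rw [← hQ] at h3
        omega
      · have h1 : (P.erase (x, b)).card ≤ MM r A B := by
          refine (hP.sub (Finset.erase_subset _ _) (fun e he => ?_) (fun e he => ?_)).card_le
          · have he' := Finset.mem_erase.1 he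
            have h1 := (hP.1 _ he'.2).1
            rcases Finset.mem_insert.1 h1 with h5 | h5
            · exact absurd (hP.2.1 _ he'.2 _ hb h5) he'.1
            · exact h5
          · have he' := Finset.mem_erase.1 he
            have h1 := (hP.1 _ he'.2).2.1
            rcases Finset.mem_insert.1 h1 with h5 | h5
            · exact absurd ⟨e.1, by rw [← h5]; exact he⟩ hy
            · exact h5
        have h2 := Finset.card_erase_add_one hb
        omega
    · have hx' : ∀ e ∈ P, e.1 ∈ A := by
        intro e he
        rcases Finset.mem_insert.1 (hP.1 _ he).1 with h5 | h5
        · exact absurd ⟨e.2, by rw [← h5]; exact he⟩ hx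
        · exact h5
      by_cases hy : ∃ a, (a, y) ∈ P
      · obtain ⟨a, ha⟩ := hy
        have h1 : (P.erase (a, y)).card ≤ MM r A B := by
          refine (hP.sub (Finset.erase_subset _ _)
            (fun e he => hx' e (Finset.mem_of_mem_erase he)) (fun e he => ?_)).card_le
          have he' := Finset.mem_erase.1 he
          rcases Finset.mem_insert.1 (hP.1 _ he'.2).2.1 with h5 | h5
          · exact absurd (hP.2.2 _ he'.2 _ ha h5) he'.1
          · exact h5
        have h2 := Finset.card_erase_add_one ha
        omega
      · have h1 : P.card ≤ MM r A B := by
          refine (hP.sub subset_rfl hx' (fun e he => ?_)).card_le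
          rcases Finset.mem_insert.1 (hP.1 _ he).2.1 with h5 | h5
          · exact absurd ⟨e.1, by rw [← h5]; exact he⟩ hy
          · exact h5
        omega
  · obtain ⟨P, hP, hc⟩ := MM_exists r A B
    have hx : ∀ e ∈ P, e.1 < x := fun e he => hA _ (hP.1 e he).1
    have hy : ∀ e ∈ P, e.2 < y := fun e he => hB _ (hP.1 e he).2.1
    have hnot : (x, y) ∉ P := fun h => lt_irrefl _ (hx _ h)
    rw [← hc, ← Finset.card_insert_of_notMem hnot]
    apply IsM.card_le
    refine ⟨?_, ?_, ?_⟩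
    · intro e he
      rcases Finset.mem_insert.1 he with rfl | he
      · simp [hxy, hyx]
      · obtain ⟨p1, p2, p3⟩ := hP.1 e he
        exact ⟨Finset.mem_insert_of_mem p1, Finset.mem_insert_of_mem p2, p3⟩
    · intro e he f hf hef
      rcases Finset.mem_insert.1 he with rfl | he <;>
      rcases Finset.mem_insert.1 hf with rfl | hf
      · rfl
      · exact absurd hef.symm (hx f hf).ne
      · exact absurd hef (hx e he).ne
      · exact hP.2.1 _ he _ hf hef
    · intro e he f hf hef
      rcases Finset.mem_insert.1 he with rfl | he <;>
      rcases Finset.mem_insert.1 hf with rfl | hf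
      · rfl
      · exact absurd hef.symm (hy f hf).ne
      · exact absurd hef (hy e he).ne
      · exact hP.2.2 _ he _ hf hef

/-- Expectation over a Bernoulli(p) random subset of `range n`. -/
noncomputable def bs (p : ℝ) : ℕ → (Finset ℕ → ℝ) → ℝ
  | 0, g => g ∅
  | n + 1, g => (1 - p) * bs p n g + p * bs p n (fun S => g (insert n S))

theorem bs_congr (p : ℝ) (n : ℕ) : ∀ {g g' : Finset ℕ → ℝ}
    (_ : ∀ S ⊆ Finset.range n, g S = g' S), bs p n g = bs p n g' := by
  induction n with
  | zero => intro g g' h; exact h _ (by simp)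
  | succ n ih =>
    intro g g' h
    have hs : Finset.range n ⊆ Finset.range (n + 1) := Finset.range_mono (Nat.le_succ n)
    simp only [bs]
    rw [ih (fun S hS => h S (hS.trans hs)),
      ih (fun S hS => h (insert n S) (Finset.insert_subset (by simp) (hS.trans hs)))]

theorem bs_mono {p : ℝ} (h0 : 0 ≤ p) (h1 : p ≤ 1) (n : ℕ) : ∀ {g g' : Finset ℕ → ℝ}
    (_ : ∀ S ⊆ Finset.range n, g S ≤ g' S), bs p n g ≤ bs p n g' := by
  induction n with
  | zero => intro g g' h; exact h _ (by simp)
  | succ n ih =>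
    intro g g' h
    have hs : Finset.range n ⊆ Finset.range (n + 1) := Finset.range_mono (Nat.le_succ n)
    simp only [bs]
    have a1 := ih (fun S hS => h S (hS.trans hs))
    have a2 := ih (fun S hS => h (insert n S) (Finset.insert_subset (by simp) (hS.trans hs)))
    have := sub_nonneg.2 h1
    gcongr

theorem bs_const (p : ℝ) (n : ℕ) (a : ℝ) : bs p n (fun _ => a) = a := by
  induction n with
  | zero => rfl
  | succ n ih => simp only [bs, ih]; ring

theorem bs_add (p : ℝ) (n : ℕ) : ∀ (g g' : Finset ℕ → ℝ),
    bs p n (fun S => g S + g' S) = bs p n g + bs p n g' := by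
  induction n with
  | zero => intro g g'; rfl
  | succ n ih => intro g g'; simp only [bs]; rw [ih, ih]; ring

theorem bs_smul (p : ℝ) (n : ℕ) (a : ℝ) : ∀ (g : Finset ℕ → ℝ),
    bs p n (fun S => a * g S) = a * bs p n g := by
  induction n with
  | zero => intro g; rfl
  | succ n ih => intro g; simp only [bs]; rw [ih, ih]; ring

noncomputable def VV (r : ℕ) (p : ℝ) (n m : ℕ) : ℝ :=
  bs p n (fun S => bs p m (fun T => (MM r S T : ℝ)))

noncomputable def HH (r : ℕ) (p : ℝ) (n m : ℕ) : ℝ :=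
  bs p n (fun S => bs p m (fun T => (MM r (insert n S) T : ℝ)))

theorem VV_succ (r : ℕ) (p : ℝ) (n m : ℕ) :
    VV r p (n + 1) m = (1 - p) * VV r p n m + p * HH r p n m := rfl

theorem HH_succ (r : ℕ) (p : ℝ) (n m : ℕ) (h1 : n ≤ m + r) (h2 : m ≤ n + r) :
    HH r p n (m + 1) = (1 - p) * HH r p n m + p * (VV r p n m + 1) := by
  have : bs p n (fun S => bs p m (fun T => (MM r (insert n S) (insert m T) : ℝ)))
      = VV r p n m + 1 := by
    unfold VV
    rw [← bs_const p n 1, ← bs_add]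
    refine bs_congr p n fun S hS => ?_
    rw [← bs_const p m 1, ← bs_add]
    refine bs_congr p m fun T hT => ?_
    rw [MM_top r (fun a ha => Finset.mem_range.1 (hS ha)) (fun a ha => Finset.mem_range.1 (hT ha))
      h1 h2]
    push_cast; rfl
  rw [← this]
  unfold HH
  simp only [bs]
  rw [bs_add, bs_smul, bs_smul]

theorem HH_far (r : ℕ) (p : ℝ) (n m : ℕ) (h : m + r ≤ n) : HH r p n m = VV r p n m := by
  refine bs_congr p n fun S hS => bs_congr p m fun T hT => ?_
  rw [MM_far]
  intro b hb
  have := Finset.mem_range.1 (hT hb)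
  omega

theorem VV_far (r : ℕ) (p : ℝ) (n m : ℕ) (h : n + r ≤ m) : VV r p n (m + 1) = VV r p n m := by
  refine bs_congr p n fun S hS => ?_
  simp only [bs]
  have : bs p m (fun T => (MM r S (insert m T) : ℝ)) = bs p m (fun T => (MM r S T : ℝ)) := by
    refine bs_congr p m fun T hT => ?_
    rw [MM_comm, MM_far, MM_comm]
    intro b hb
    have := Finset.mem_range.1 (hS hb)
    omega
  rw [this]; ring

theorem VV_nonneg {r : ℕ} {p : ℝ} (h0 : 0 ≤ p) (h1 : p ≤ 1) (n m : ℕ) : 0 ≤ VV r p n m := by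
  rw [← bs_const p n 0]
  refine bs_mono h0 h1 n fun S hS => ?_
  rw [← bs_const p m 0]
  exact bs_mono h0 h1 m fun T hT => by positivity

theorem VV_le {r : ℕ} {p : ℝ} (h0 : 0 ≤ p) (h1 : p ≤ 1) (n m : ℕ) : VV r p n m ≤ n := by
  rw [← bs_const p n n]
  refine bs_mono h0 h1 n fun S hS => ?_
  rw [← bs_const p m n]
  refine bs_mono h0 h1 m fun T hT => ?_
  have h1 := MM_le_left r S T
  have h2 := Finset.card_le_card hS
  rw [Finset.card_range] at h2
  exact_mod_cast h1.trans h2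

theorem conv_close {p x x' y y' C : ℝ} (h0 : 0 ≤ p) (h1 : p ≤ 1) (hx : |x - x'| ≤ C)
    (hy : |y - y'| ≤ C) : |((1 - p) * x + p * y) - ((1 - p) * x' + p * y')| ≤ C := by
  rw [abs_le] at *
  constructor <;> nlinarith

theorem VV_bound (r : ℕ) {p : ℝ} (h0 : 0 < p) (h1 : p ≤ 1) :
    ∃ C : ℝ, ∀ n, |VV r p n n - p ^ 2 * (2 * r + 1) / (1 + 2 * r * p) * n| ≤ C := by
  set A : ℝ := p ^ 2 / (1 + 2 * r * p) with hA
  have hden : (0 : ℝ) < 1 + 2 * r * p := by positivity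
  have hAp : A * (1 + 2 * r * p) = p ^ 2 := by rw [hA]; field_simp
  have hA0 : 0 < A := by positivity
  -- `a k`, with `k = m + r - n`
  set a : ℝ → ℝ := fun k => A * (k * (4 * r + 1 - k) / 2) with ha
  set b : ℝ → ℝ := fun k => a k + A * k / p with hb
  have hbs : ∀ k, b (k + 1) = (1 - p) * b k + p * (a k + 1) := by
    intro k
    simp only [hb, ha]
    have : A / p * (1 + 2 * r * p) = p := by rw [div_mul_eq_mul_div, hAp]; field_simp
    have h2 : A = A / p * p := by field_simp
    generalize A / p = z at *
    have e1 : ∀ k : ℝ, A * k / p = z * k := by intro k; rw [h2]; field_simp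
    rw [e1, e1, h2]
    linear_combination this
  set lam : ℝ := A * (2 * r + 1) with hlam
  have has : ∀ k, lam + a k = (1 - p) * a (k + 1) + p * b (k + 1) := by
    intro k
    simp only [hb, ha, hlam]
    field_simp
    ring
  have hatop : a (2 * r + 1) = a (2 * r) := by simp only [ha]; ring
  have ha0 : ∀ k : ℝ, 0 ≤ k → k ≤ 2 * r → 0 ≤ a k ∧ a k ≤ A * (2 * r * (4 * r + 1)) := by
    intro k hk hk'
    simp only [ha]
    have hr : (0 : ℝ) ≤ r := by positivity
    constructor
    · have : 0 ≤ 4 * r + 1 - k := by linarith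
      positivity
    · apply mul_le_mul_of_nonneg_left _ hA0.le
      nlinarith
  set C : ℝ := r + lam * r + A * (2 * r * (4 * r + 1)) with hC
  have main : ∀ n m : ℕ, n ≤ m + r → m ≤ n + r →
      |VV r p n m - (lam * n + a ((m : ℝ) + r - n))| ≤ C := by
    intro n
    induction n with
    | zero =>
      intro m _ hm
      have e : VV r p 0 m = 0 := le_antisymm (by simpa using VV_le (r := r) h0.le h1 0 m)
        (VV_nonneg h0.le h1 0 m)
      rw [e]
      have hm' : (m : ℝ) ≤ r := by exact_mod_cast (by omega : m ≤ r)
      have := ha0 ((m : ℝ) + r - (0 : ℕ)) (by simp only [Nat.cast_zero, sub_zero]; positivity) (by push_cast; linarith)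
      have hlam0 : 0 ≤ lam * r := by positivity
      have hr : (0 : ℝ) ≤ r := by positivity
      rw [abs_le]
      push_cast at *
      constructor <;> linarith
    | succ n ih =>
      intro m hm1 hm2
      by_cases hn : n + 1 ≤ r
      · have e1 := VV_le (r := r) h0.le h1 (n + 1) m
        have e2 := VV_nonneg (r := r) h0.le h1 (n + 1) m
        have hn' : ((n + 1 : ℕ) : ℝ) ≤ r := by exact_mod_cast hn
        have hm1' : ((n + 1 : ℕ) : ℝ) ≤ m + r := by exact_mod_cast hm1
        have hm2' : (m : ℝ) ≤ (n + 1 : ℕ) + r := by exact_mod_cast hm2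
        have := ha0 ((m : ℝ) + r - (n + 1 : ℕ)) (by linarith) (by linarith)
        have hl0 : 0 ≤ lam := by positivity
        have hn0 : (0 : ℝ) ≤ (n + 1 : ℕ) := by positivity
        have := mul_le_mul_of_nonneg_left hn' hl0
        have := mul_nonneg hl0 hn0
        rw [abs_le]
        constructor <;> linarith
      · -- claim for HH
        have hH : ∀ j : ℕ, j ≤ 2 * r + 1 →
            |HH r p n (n - r + j) - (lam * n + b j)| ≤ C := by
          intro j
          induction j with
          | zero =>
            intro _
            rw [HH_far _ _ _ _ (by omega)]
            have := ih (n - r) (by omega) (by omega)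
            have e : ((n - r : ℕ) : ℝ) + r - n = 0 := by
              rw [Nat.cast_sub (by omega)]; ring
            rw [e] at this
            have e2 : b ((0 : ℕ) : ℝ) = a 0 := by simp [hb]
            rw [e2]; exact this
          | succ j ihj =>
            intro hj
            rw [← add_assoc, HH_succ _ _ _ _ (by omega) (by omega)]
            have i1 := ihj (by omega)
            have i2 := ih (n - r + j) (by omega) (by omega)
            have e : ((n - r + j : ℕ) : ℝ) + r - n = j := by
              rw [Nat.cast_add, Nat.cast_sub (by omega)]; ring
            rw [e] at i2
            have := conv_close h0.le h1 i1 (y := VV r p n (n - r + j) + 1)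
              (y' := lam * n + a j + 1) (by convert i2 using 2; ring)
            convert this using 2
            push_cast
            rw [hbs]; ring
        obtain ⟨k, rfl⟩ : ∃ k, m = n - r + (k + 1) := ⟨m + r - n - 1, by omega⟩
        rw [VV_succ]
        have i1 := hH (k + 1) (by omega)
        have i2 : |VV r p n (n - r + (k + 1)) - (lam * n + a (k + 1))| ≤ C := by
          by_cases hk : k + 1 ≤ 2 * r
          · have := ih (n - r + (k + 1)) (by omega) (by omega)
            convert this using 4
            push_cast
            rw [Nat.cast_sub (by omega)]; ring
          · have hk' : k = 2 * r := by omega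
            subst hk'
            rw [← add_assoc, VV_far _ _ _ _ (by omega)]
            have := ih (n - r + 2 * r) (by omega) (by omega)
            convert this using 3
            push_cast
            rw [Nat.cast_sub (by omega), hatop]; ring_nf
        have := conv_close h0.le h1 i2 i1
        convert this using 2
        push_cast
        rw [Nat.cast_sub (by omega)]
        have e : ((n : ℝ) - r + (k + 1) + r - (n + 1)) = k := by ring
        rw [e]
        linarith [has k]
  refine ⟨C + |a r|, fun n => ?_⟩
  have := main n n (by omega) (by omega)
  have e : p ^ 2 * (2 * r + 1) / (1 + 2 * r * p) * n = lam * n := by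
    rw [hlam, hA]; ring
  rw [e]
  have e2 : (n : ℝ) + r - n = r := by ring
  rw [e2] at this
  calc |VV r p n n - lam * n| = |(VV r p n n - (lam * n + a r)) + a r| := by congr 1; ring
    _ ≤ _ := abs_add_le _ _
    _ ≤ _ := by linarith


/-! Part 2 -/

theorem bs_eq_sum_powerset (p : ℝ) (n : ℕ) : ∀ g : Finset ℕ → ℝ, bs p n g =
    ∑ S ∈ (Finset.range n).powerset, p ^ S.card * (1 - p) ^ (n - S.card) * g S := by
  induction n with
  | zero => intro g; simp [bs]
  | succ n ih =>
    intro g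
    rw [Finset.range_add_one, Finset.sum_powerset_insert (by simp)]
    simp only [bs]
    rw [ih, ih, Finset.mul_sum, Finset.mul_sum]
    congr 1
    · refine Finset.sum_congr rfl fun S hS => ?_
      have h := Finset.card_le_card (Finset.mem_powerset.1 hS)
      rw [Finset.card_range] at h
      rw [Nat.sub_add_comm h, pow_succ]; ring
    · refine Finset.sum_congr rfl fun S hS => ?_
      have hn : n ∉ S := fun h => by simpa using Finset.mem_powerset.1 hS h
      rw [Finset.card_insert_of_notMem hn, Nat.add_sub_add_right, pow_succ]; ring

theorem bs_eq_sum (p : ℝ) (n : ℕ) (g : Finset ℕ → ℝ) : bs p n g =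
    ∑ S : Finset (Fin n), p ^ S.card * (1 - p) ^ (n - S.card) * g (S.map Fin.valEmbedding) := by
  rw [bs_eq_sum_powerset]
  symm
  refine Finset.sum_bij (fun S _ => S.map Fin.valEmbedding) ?_ ?_ ?_ ?_
  · intro S _
    rw [Finset.mem_powerset]
    intro x hx
    obtain ⟨i, _, rfl⟩ := Finset.mem_map.1 hx
    simp
  · intro S _ T _ h
    exact Finset.map_injective _ h
  · intro T hT
    refine ⟨Finset.univ.filter (fun i : Fin n => (i : ℕ) ∈ T), Finset.mem_univ _, ?_⟩
    ext x
    simp only [Finset.mem_map, Finset.mem_filter, Finset.mem_univ, true_and,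
      Fin.valEmbedding_apply]
    constructor
    · rintro ⟨i, hi, rfl⟩; exact hi
    · intro hx
      exact ⟨⟨x, Finset.mem_range.1 (Finset.mem_powerset.1 hT hx)⟩, hx, rfl⟩
  · intro S _
    simp

/-- centered first and second moments -/
theorem bs_moments (p : ℝ) (n : ℕ) :
    bs p n (fun S => ((S.card : ℝ) - n * p)) = 0 ∧
    bs p n (fun S => ((S.card : ℝ) - n * p) ^ 2) = n * p * (1 - p) := by
  induction n with
  | zero => simp [bs]
  | succ n ih =>
    obtain ⟨i1, i2⟩ := ih
    have hc : ∀ S ⊆ Finset.range n, (((insert n S).card : ℕ) : ℝ) = S.card + 1 := by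
      intro S hS
      have hn : n ∉ S := fun h => by simpa using hS h
      rw [Finset.card_insert_of_notMem hn]; push_cast; rfl
    constructor
    · simp only [bs]
      rw [bs_congr p n (g' := fun S => ((S.card : ℝ) - n * p) + (-p))
        (fun S hS => by push_cast; ring), bs_add, bs_const, i1,
        bs_congr p n (g' := fun S => ((S.card : ℝ) - n * p) + (1 - p))
        (fun S hS => by rw [hc S hS]; push_cast; ring), bs_add, bs_const, i1]
      ring
    · simp only [bs]
      rw [bs_congr p n (g' := fun S => ((S.card : ℝ) - n * p) ^ 2 +
          ((-2 * p) * ((S.card : ℝ) - n * p) + p ^ 2))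
        (fun S hS => by push_cast; ring), bs_add, bs_add, bs_smul, bs_const, i1, i2,
        bs_congr p n (g' := fun S => ((S.card : ℝ) - n * p) ^ 2 +
          ((2 * (1 - p)) * ((S.card : ℝ) - n * p) + (1 - p) ^ 2))
        (fun S hS => by rw [hc S hS]; push_cast; ring), bs_add, bs_add, bs_smul, bs_const, i1, i2]
      push_cast; ring

theorem bs_dev {p : ℝ} (h0 : 0 ≤ p) (h1 : p ≤ 1) (n N : ℕ) (hN : (n : ℝ) * p = N)
    {t : ℝ} (ht : 0 < t) : bs p n (fun S => |(S.card : ℝ) - N|) ≤ t + N / t := by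
  have h := (bs_moments p n).2
  calc bs p n (fun S => |(S.card : ℝ) - N|)
      ≤ bs p n (fun S => t + (1 / t) * ((S.card : ℝ) - n * p) ^ 2) := by
        refine bs_mono h0 h1 n fun S _ => ?_
        rw [hN]
        generalize (S.card : ℝ) - N = x
        have e : t + 1 / t * x ^ 2 - |x| = ((|x| - t) ^ 2 + |x| * t) / t := by
          field_simp; rw [← sq_abs x]; ring
        have : 0 ≤ ((|x| - t) ^ 2 + |x| * t) / t := by positivity
        linarith
    _ = t + (1 / t) * (N * (1 - p)) := by rw [bs_add, bs_const, bs_smul, h, hN]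
    _ ≤ t + N / t := by
        rw [one_div_mul_eq_div]
        gcongr
        have : (0 : ℝ) ≤ N := by positivity
        nlinarith

theorem exists_perm_map {n : ℕ} (S T : Finset (Fin n)) (h : S.card ≤ T.card) :
    ∃ π : Equiv.Perm (Fin n), S.map π.toEmbedding ⊆ T := by
  obtain ⟨T', hT', hc⟩ := Finset.exists_subset_card_eq h
  let e : {x // x ∈ S} ≃ {x // x ∈ T'} := Finset.equivOfCardEq hc.symm
  refine ⟨e.extendSubtype, fun x hx => ?_⟩
  obtain ⟨i, hi, rfl⟩ := Finset.mem_map.1 hx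
  exact hT' (e.extendSubtype_mem i hi)

noncomputable def permAvg {n : ℕ} (F : Finset (Fin n) → ℝ) (S : Finset (Fin n)) : ℝ :=
  (∑ π : Equiv.Perm (Fin n), F (S.map π.toEmbedding)) / (Fintype.card (Equiv.Perm (Fin n)))

theorem permAvg_map {n : ℕ} (F : Finset (Fin n) → ℝ) (S : Finset (Fin n))
    (π₀ : Equiv.Perm (Fin n)) : permAvg F (S.map π₀.toEmbedding) = permAvg F S := by
  unfold permAvg
  congr 1
  rw [← Equiv.sum_comp (Equiv.mulRight π₀) (fun π => F (S.map π.toEmbedding))]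
  refine Finset.sum_congr rfl fun π _ => ?_
  rw [Finset.map_map]
  rfl

def FLip {n : ℕ} (F : Finset (Fin n) → ℝ) : Prop :=
  ∀ S T, S ⊆ T → |F T - F S| ≤ (T.card : ℝ) - S.card

theorem permAvg_lip' {n : ℕ} {F : Finset (Fin n) → ℝ} (hF : FLip F) {S T : Finset (Fin n)}
    (h : S.card ≤ T.card) : |permAvg F T - permAvg F S| ≤ (T.card : ℝ) - S.card := by
  obtain ⟨π₀, h0⟩ := exists_perm_map S T h
  rw [← permAvg_map F S π₀]
  have hc : (S.map π₀.toEmbedding).card = S.card := Finset.card_map _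
  rw [← hc]
  generalize S.map π₀.toEmbedding = S' at h0
  unfold permAvg
  have hpos : (0 : ℝ) < Fintype.card (Equiv.Perm (Fin n)) := by
    exact_mod_cast Fintype.card_pos
  rw [← sub_div, ← Finset.sum_sub_distrib, abs_div, abs_of_pos hpos, div_le_iff₀ hpos]
  calc _ ≤ ∑ π : Equiv.Perm (Fin n), |F (T.map π.toEmbedding) - F (S'.map π.toEmbedding)| :=
        Finset.abs_sum_le_sum_abs _ _
    _ ≤ ∑ π : Equiv.Perm (Fin n), ((T.card : ℝ) - S'.card) := by
        refine Finset.sum_le_sum fun π _ => ?_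
        have := hF (S'.map π.toEmbedding) (T.map π.toEmbedding) (Finset.map_subset_map.2 h0)
        rwa [Finset.card_map, Finset.card_map] at this
    _ = _ := by rw [Finset.sum_const, nsmul_eq_mul, Finset.card_univ]; ring

theorem permAvg_lip {n : ℕ} {F : Finset (Fin n) → ℝ} (hF : FLip F) (S T : Finset (Fin n)) :
    |permAvg F T - permAvg F S| ≤ |(T.card : ℝ) - S.card| := by
  rcases le_total S.card T.card with h | h
  · exact (permAvg_lip' hF h).trans (le_abs_self _)
  · rw [abs_sub_comm, abs_sub_comm (T.card : ℝ)]
    exact (permAvg_lip' hF h).trans (le_abs_self _)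

theorem sum_permAvg {n : ℕ} (F : Finset (Fin n) → ℝ) (w : ℕ → ℝ) :
    ∑ S : Finset (Fin n), w S.card * permAvg F S = ∑ S : Finset (Fin n), w S.card * F S := by
  have hpos : (0 : ℝ) < Fintype.card (Equiv.Perm (Fin n)) := by
    exact_mod_cast Fintype.card_pos
  have h : ∀ π : Equiv.Perm (Fin n), ∑ S : Finset (Fin n), w S.card * F (S.map π.toEmbedding)
      = ∑ S : Finset (Fin n), w S.card * F S := by
    intro π
    rw [← Equiv.sum_comp (Equiv.finsetCongr π) (fun S => w S.card * F S)]
    refine Finset.sum_congr rfl fun S _ => ?_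
    simp [Equiv.finsetCongr_apply]
  unfold permAvg
  simp_rw [← mul_div_assoc, Finset.mul_sum]
  rw [← Finset.sum_div, Finset.sum_comm, Finset.sum_congr rfl (fun π _ => h π),
    Finset.sum_const, nsmul_eq_mul, Finset.card_univ]
  field_simp

/-- uniform measure on `Fin n` -/
noncomputable def nu (n : ℕ) : Measure (Fin n) := (n : ENNReal)⁻¹ • Measure.count

theorem nu_singleton (n : ℕ) (a : Fin n) : nu n {a} = (n : ENNReal)⁻¹ := by
  simp [nu]

instance nu_prob (n : ℕ) [NeZero n] : IsProbabilityMeasure (nu n) := by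
  constructor
  have : (n : ENNReal) ≠ 0 := by exact_mod_cast NeZero.ne n
  rw [nu, Measure.smul_apply, Measure.count_univ]
  simp [ENNReal.inv_mul_cancel this]

theorem nu_perm (n : ℕ) (π : Equiv.Perm (Fin n)) : MeasurePreserving π (nu n) (nu n) := by
  refine ⟨measurable_of_finite _, Measure.ext_of_singleton fun a => ?_⟩
  rw [Measure.map_apply (measurable_of_finite _) (measurableSet_singleton a)]
  have : π ⁻¹' {a} = {π.symm a} := by
    ext x; simp [Equiv.eq_symm_apply]
  rw [this, nu_singleton, nu_singleton]

noncomputable def Pf (n N : ℕ) : Measure (Fin N → Fin n) := Measure.pi fun _ => nu n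

instance Pf_prob (n N : ℕ) [NeZero n] : IsProbabilityMeasure (Pf n N) := by
  unfold Pf; infer_instance

theorem Pf_perm (n N : ℕ) [NeZero n] (π : Equiv.Perm (Fin n)) :
    MeasurePreserving (fun (f : Fin N → Fin n) i => π (f i)) (Pf n N) (Pf n N) :=
  measurePreserving_pi _ _ (fun _ => nu_perm n π)

theorem integral_permAvg {n N : ℕ} [NeZero n] (F : Finset (Fin n) → ℝ) :
    ∫ f, permAvg F (Finset.univ.image f) ∂(Pf n N) = ∫ f, F (Finset.univ.image f) ∂(Pf n N) := by
  have hpos : (0 : ℝ) < Fintype.card (Equiv.Perm (Fin n)) := by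
    exact_mod_cast Fintype.card_pos
  have h : ∀ π : Equiv.Perm (Fin n), ∫ f, F ((Finset.univ.image f).map π.toEmbedding) ∂(Pf n N)
      = ∫ f, F (Finset.univ.image f) ∂(Pf n N) := by
    intro π
    conv_rhs => rw [← (Pf_perm n N π).map_eq]
    rw [integral_map (measurable_of_finite _).aemeasurable
      (measurable_of_finite _).aestronglyMeasurable]
    congr 1; ext f
    congr 1
    rw [Finset.map_eq_image, Finset.image_image]; rfl
  unfold permAvg
  rw [integral_div, integral_finsetSum _ (fun _ _ => Integrable.of_finite),
    Finset.sum_congr rfl (fun π _ => h π), Finset.sum_const, nsmul_eq_mul, Finset.card_univ]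
  field_simp

theorem Pf_pair {n N : ℕ} [NeZero n] {i j : Fin N} (hij : i ≠ j) :
    (Pf n N) {f | f i = f j} = (n : ENNReal)⁻¹ := by
  have hn : (n : ENNReal) ≠ 0 := by exact_mod_cast NeZero.ne n
  have h1 : {f : Fin N → Fin n | f i = f j} = ⋃ a : Fin n,
      Set.univ.pi (fun k => if k ∈ ({i, j} : Finset (Fin N)) then {a} else Set.univ) := by
    ext f
    simp only [Set.mem_ofPred_eq, Set.mem_iUnion, Set.mem_pi, Set.mem_univ, true_implies]
    constructor
    · intro h
      refine ⟨f i, fun k => ?_⟩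
      split_ifs with hk
      · simp only [Finset.mem_insert, Finset.mem_singleton] at hk
        rcases hk with rfl | rfl
        · rfl
        · exact h.symm
      · trivial
    · rintro ⟨a, ha⟩
      have h1 := ha i
      have h2 := ha j
      simp at h1 h2
      rw [h1, h2]
  rw [h1, measure_iUnion]
  · have : ∀ a : Fin n, (Pf n N) (Set.univ.pi
        (fun k => if k ∈ ({i, j} : Finset (Fin N)) then {a} else Set.univ))
        = (n : ENNReal)⁻¹ * (n : ENNReal)⁻¹ := by
      intro a
      rw [Pf, Measure.pi_pi]
      have : ∀ k, nu n (if k ∈ ({i, j} : Finset (Fin N)) then {a} else Set.univ)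
          = if k ∈ ({i, j} : Finset (Fin N)) then (n : ENNReal)⁻¹ else 1 := by
        intro k
        split_ifs
        · exact nu_singleton n a
        · exact measure_univ
      rw [Finset.prod_congr rfl (fun k _ => this k), Finset.prod_ite_mem, Finset.univ_inter,
        Finset.prod_const, Finset.card_pair hij, sq]
    simp_rw [this]
    rw [tsum_fintype, Finset.sum_const, Finset.card_univ, Fintype.card_fin, nsmul_eq_mul,
      ← mul_assoc, ENNReal.mul_inv_cancel hn (by simp), one_mul]
  · intro a b hab
    rw [Function.onFun, Set.disjoint_left]
    intro f hf hf'
    have h1 := hf i trivial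
    have h2 := hf' i trivial
    simp at h1 h2
    exact hab (h1.symm.trans h2)
  · intro a
    exact (Set.toFinite _).measurableSet

theorem collision_det {n N : ℕ} (f : Fin N → Fin n) :
    (N : ℝ) - (Finset.univ.image f).card ≤
      ∑ i : Fin N, ∑ j ∈ Finset.univ.filter (fun j => j ≠ i),
        Set.indicator {f : Fin N → Fin n | f i = f j} (fun _ => (1 : ℝ)) f := by
  classical
  set good := Finset.univ.filter (fun i : Fin N => ∀ j < i, f j ≠ f i) with hg
  have h1 : good.card ≤ (Finset.univ.image f).card := by
    refine Finset.card_le_card_of_injOn f (fun i _ => by simp) ?_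
    intro i hi j hj hij
    have hi := (Finset.mem_filter.1 hi).2
    have hj := (Finset.mem_filter.1 hj).2
    rcases lt_trichotomy i j with h | h | h
    · exact absurd hij (hj i h)
    · exact h
    · exact absurd hij.symm (hi j h)
  have h2 := Finset.card_filter_add_card_filter_not (s := Finset.univ)
    (fun i : Fin N => ∀ j < i, f j ≠ f i)
  rw [Finset.card_univ, Fintype.card_fin] at h2
  set bad := Finset.univ.filter (fun i : Fin N => ¬ ∀ j < i, f j ≠ f i) with hb
  have h3 : (bad.card : ℝ) ≤ ∑ i : Fin N, ∑ j ∈ Finset.univ.filter (fun j => j ≠ i),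
        Set.indicator {f : Fin N → Fin n | f i = f j} (fun _ => (1 : ℝ)) f := by
    have hnn : ∀ i j : Fin N, 0 ≤ Set.indicator {f : Fin N → Fin n | f i = f j}
        (fun _ => (1 : ℝ)) f := fun i j => Set.indicator_nonneg (fun _ _ => zero_le_one) _
    rw [Finset.card_eq_sum_ones, Nat.cast_sum]
    refine (Finset.sum_le_sum ?_).trans (Finset.sum_le_sum_of_subset_of_nonneg
      (Finset.subset_univ bad) (fun i _ _ => Finset.sum_nonneg fun j _ => hnn i j))
    intro i hi
    have hi := (Finset.mem_filter.1 hi).2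
    push Not at hi
    obtain ⟨j, hj, hji⟩ := hi
    refine le_trans ?_ (Finset.single_le_sum (fun j _ => hnn i j)
      (Finset.mem_filter.2 ⟨Finset.mem_univ j, hj.ne⟩))
    rw [Set.indicator_of_mem (by exact hji.symm)]
    simp
  have h4 : (N : ℝ) = good.card + bad.card := by exact_mod_cast h2.symm
  have h5 : (good.card : ℝ) ≤ (Finset.univ.image f).card := by exact_mod_cast h1
  linarith

theorem collision {n N : ℕ} [NeZero n] :
    ∫ f, ((N : ℝ) - (Finset.univ.image f).card) ∂(Pf n N) ≤ (N : ℝ) ^ 2 / n := by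
  calc _ ≤ ∫ f, (∑ i : Fin N, ∑ j ∈ Finset.univ.filter (fun j => j ≠ i),
        Set.indicator {f : Fin N → Fin n | f i = f j} (fun _ => (1 : ℝ)) f) ∂(Pf n N) :=
        integral_mono Integrable.of_finite Integrable.of_finite (fun f => collision_det f)
    _ = ∑ i : Fin N, ∑ j ∈ Finset.univ.filter (fun j => j ≠ i), (1 : ℝ) / n := by
        rw [integral_finsetSum _ (fun _ _ => Integrable.of_finite)]
        refine Finset.sum_congr rfl fun i _ => ?_
        rw [integral_finsetSum _ (fun _ _ => Integrable.of_finite)]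
        refine Finset.sum_congr rfl fun j hj => ?_
        rw [integral_indicator_const _ (Set.toFinite _).measurableSet, measureReal_def,
          Pf_pair (Finset.mem_filter.1 hj).2.symm]
        simp
    _ ≤ ∑ i : Fin N, ∑ j : Fin N, (1 : ℝ) / n := by
        refine Finset.sum_le_sum fun i _ => Finset.sum_le_sum_of_subset_of_nonneg
          (Finset.subset_univ _) (fun _ _ _ => by positivity)
    _ = _ := by simp; ring

theorem compare {n N : ℕ} [NeZero n] (hNn : N ≤ n) {p : ℝ} (h0 : 0 ≤ p) (h1 : p ≤ 1)
    (hN : (n : ℝ) * p = N) {t : ℝ} (ht : 0 < t) (g : Finset ℕ → ℝ)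
    (hg : ∀ S T, S ⊆ T → |g T - g S| ≤ (T.card : ℝ) - S.card) :
    |∫ f, g ((Finset.univ.image f).map Fin.valEmbedding) ∂(Pf n N) - bs p n g| ≤
      (N : ℝ) ^ 2 / n + (t + N / t) := by
  set F : Finset (Fin n) → ℝ := fun S => g (S.map Fin.valEmbedding) with hF
  have hL : FLip F := by
    intro S T h
    have := hg (S.map Fin.valEmbedding) (T.map Fin.valEmbedding) (Finset.map_subset_map.2 h)
    rwa [Finset.card_map, Finset.card_map] at this
  obtain ⟨S0, -, hS0⟩ := Finset.exists_subset_card_eq (s := (Finset.univ : Finset (Fin n)))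
    (n := N) (by simpa using hNn)
  have e1 : |∫ f, F (Finset.univ.image f) ∂(Pf n N) - permAvg F S0| ≤ (N : ℝ) ^ 2 / n := by
    refine le_trans ?_ (collision (n := n) (N := N))
    rw [← integral_permAvg F]
    have : permAvg F S0 = ∫ f : Fin N → Fin n, permAvg F S0 ∂(Pf n N) := by simp
    rw [this, ← integral_sub Integrable.of_finite Integrable.of_finite]
    refine (abs_integral_le_integral_abs).trans
      (integral_mono Integrable.of_finite Integrable.of_finite fun f => ?_)
    have hle : (Finset.univ.image f).card ≤ S0.card := by
      rw [hS0]; simpa using Finset.card_image_le (s := Finset.univ) (f := f)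
    have := permAvg_lip' hL hle
    rw [abs_sub_comm, hS0] at this
    exact this
  have e2 : |bs p n g - permAvg F S0| ≤ t + N / t := by
    refine le_trans ?_ (bs_dev h0 h1 n N hN ht)
    have hsum := sum_permAvg F (fun k => p ^ k * (1 - p) ^ (n - k))
    have hone := bs_const p n (permAvg F S0)
    rw [bs_eq_sum] at hone
    rw [bs_eq_sum, bs_eq_sum]
    change |∑ S : Finset (Fin n), (fun k => p ^ k * (1 - p) ^ (n - k)) S.card * F S - _| ≤ _
    rw [← hsum, ← hone, ← Finset.sum_sub_distrib]
    refine (Finset.abs_sum_le_sum_abs _ _).trans (Finset.sum_le_sum fun S _ => ?_)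
    have hw : 0 ≤ p ^ S.card * (1 - p) ^ (n - S.card) := by
      have := sub_nonneg.2 h1
      positivity
    rw [← mul_sub, abs_mul, abs_of_nonneg hw, Finset.card_map]
    refine mul_le_mul_of_nonneg_left ?_ hw
    have := permAvg_lip hL S0 S
    rwa [hS0] at this
  calc _ = |(∫ f, F (Finset.univ.image f) ∂(Pf n N) - permAvg F S0)
        - (bs p n g - permAvg F S0)| := by congr 1; ring
    _ ≤ _ := abs_sub _ _
    _ ≤ _ := add_le_add e1 e2

/-! Part 3 -/

theorem mmSize_bdd (r : ℝ) {k k' : ℕ} (X : Fin k → ℝ) (Y : Fin k' → ℝ) :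
    BddAbove {j : ℕ | ∃ σ : Fin j → Fin k, ∃ τ : Fin j → Fin k',
    Function.Injective σ ∧ Function.Injective τ ∧ ∀ i, |X (σ i) - Y (τ i)| < r} :=
  ⟨k, by
    rintro j ⟨σ, τ, h, -⟩
    simpa using Fintype.card_le_of_injective σ h⟩

theorem mmSize_mem (r : ℝ) {k k' : ℕ} (X : Fin k → ℝ) (Y : Fin k' → ℝ) :
    ∃ σ : Fin (mmSize r X Y) → Fin k, ∃ τ : Fin (mmSize r X Y) → Fin k',
    Function.Injective σ ∧ Function.Injective τ ∧ ∀ i, |X (σ i) - Y (τ i)| < r := by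
  have : mmSize r X Y ∈ {j : ℕ | ∃ σ : Fin j → Fin k, ∃ τ : Fin j → Fin k',
    Function.Injective σ ∧ Function.Injective τ ∧ ∀ i, |X (σ i) - Y (τ i)| < r} :=
    Nat.sSup_mem ⟨0, Fin.elim0, Fin.elim0, fun i => i.elim0, fun i => i.elim0, fun i => i.elim0⟩
      (mmSize_bdd r X Y)
  exact this

theorem mmSize_le (r : ℝ) {k k' : ℕ} (X : Fin k → ℝ) (Y : Fin k' → ℝ) : mmSize r X Y ≤ k := by
  obtain ⟨σ, τ, h, -⟩ := mmSize_mem r X Y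
  simpa using Fintype.card_le_of_injective σ h

theorem le_mmSize_iff (r : ℝ) {k k' : ℕ} (X : Fin k → ℝ) (Y : Fin k' → ℝ) (j : ℕ) :
    j ≤ mmSize r X Y ↔ ∃ σ : Fin j → Fin k, ∃ τ : Fin j → Fin k',
    Function.Injective σ ∧ Function.Injective τ ∧ ∀ i, |X (σ i) - Y (τ i)| < r := by
  constructor
  · intro h
    obtain ⟨σ, τ, h1, h2, h3⟩ := mmSize_mem r X Y
    exact ⟨σ ∘ Fin.castLE h, τ ∘ Fin.castLE h, h1.comp (Fin.castLE_injective h),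
      h2.comp (Fin.castLE_injective h), fun i => h3 _⟩
  · intro h
    exact le_csSup (mmSize_bdd r X Y) h

theorem measurable_mmSize (r : ℝ) (k k' : ℕ) :
    Measurable (fun ω : (Fin k → ℝ) × (Fin k' → ℝ) => mmSize r ω.1 ω.2) := by
  refine measurable_of_Ici fun j => ?_
  have : (fun ω : (Fin k → ℝ) × (Fin k' → ℝ) => mmSize r ω.1 ω.2) ⁻¹' Set.Ici j =
      ⋃ σ : Fin j → Fin k, ⋃ τ : Fin j → Fin k', ⋃ _ : Function.Injective σ,
        ⋃ _ : Function.Injective τ, ⋂ i, {ω | |ω.1 (σ i) - ω.2 (τ i)| < r} := by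
    ext ω
    simp only [Set.mem_preimage, Set.mem_Ici, le_mmSize_iff, Set.mem_iUnion, Set.mem_iInter,
      Set.mem_ofPred_eq, exists_prop]
  rw [this]
  refine MeasurableSet.iUnion fun σ => MeasurableSet.iUnion fun τ => MeasurableSet.iUnion fun _ =>
    MeasurableSet.iUnion fun _ => MeasurableSet.iInter fun i => ?_
  exact measurableSet_lt (by fun_prop) (by fun_prop)

noncomputable def cell (n : ℕ) [NeZero n] (x : ℝ) : Fin n :=
  ⟨min ⌊n * x⌋₊ (n - 1), by have := NeZero.pos n; omega⟩

theorem cell_bounds {n : ℕ} [NeZero n] {x : ℝ} (hx : x ∈ Set.Icc (0 : ℝ) 1) :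
    ((cell n x : ℕ) : ℝ) ≤ n * x ∧ n * x ≤ (cell n x : ℕ) + 1 := by
  have hn := NeZero.pos n
  have hn0 : (0 : ℝ) ≤ n := by positivity
  have h0 : 0 ≤ n * x := mul_nonneg hn0 hx.1
  have h1 : n * x ≤ n := mul_le_of_le_one_right hn0 hx.2
  have e : (cell n x : ℕ) = min ⌊n * x⌋₊ (n - 1) := rfl
  constructor
  · refine le_trans ?_ (Nat.floor_le h0)
    exact_mod_cast e ▸ min_le_left _ _
  · rw [e]
    rcases le_total ⌊n * x⌋₊ (n - 1) with h | h
    · rw [min_eq_left h]; exact (Nat.lt_floor_add_one _).le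
    · rw [min_eq_right h]
      have : ((n - 1 : ℕ) : ℝ) + 1 = n := by exact_mod_cast Nat.sub_add_cancel hn
      rw [this]; exact h1

theorem measurable_cell (n : ℕ) [NeZero n] : Measurable (cell n) := by
  have h : Measurable (fun m : ℕ => (⟨min m (n - 1), by have := NeZero.pos n; omega⟩ : Fin n)) :=
    measurable_from_top
  exact h.comp (Nat.measurable_floor.comp (measurable_const_mul (n : ℝ)))

theorem cell_mp (n : ℕ) [NeZero n] :
    MeasurePreserving (cell n) (volume.restrict (Set.Icc 0 1)) (nu n) := by
  refine ⟨measurable_cell n, Measure.ext_of_singleton fun a => ?_⟩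
  rw [Measure.map_apply (measurable_cell n) (measurableSet_singleton a), nu_singleton,
    ← Measure.restrict_congr_set Ico_ae_eq_Icc,
    Measure.restrict_apply (measurable_cell n (measurableSet_singleton a))]
  have hn : (0 : ℝ) < n := by exact_mod_cast NeZero.pos n
  have : cell n ⁻¹' {a} ∩ Set.Ico 0 1 = Set.Ico ((a : ℝ) / n) (((a : ℝ) + 1) / n) := by
    ext x
    simp only [Set.mem_inter_iff, Set.mem_preimage, Set.mem_singleton_iff, Set.mem_Ico]
    rw [div_le_iff₀ hn, lt_div_iff₀ hn, mul_comm x]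
    have key : 0 ≤ x → x < 1 → (cell n x = a ↔ ⌊n * x⌋₊ = (a : ℕ)) := by
      intro h0 h1
      have hlt : ⌊n * x⌋₊ < n := by
        rw [Nat.floor_lt (by positivity)]
        nlinarith
      rw [Fin.ext_iff]
      have e : (cell n x : ℕ) = min ⌊n * x⌋₊ (n - 1) := rfl
      rw [e, min_eq_left (by omega)]
    have ha : ((a : ℕ) : ℝ) + 1 ≤ n := by exact_mod_cast a.2
    constructor
    · rintro ⟨h, h0, h1⟩
      rw [key h0 h1, Nat.floor_eq_iff (by positivity)] at h
      exact h
    · rintro ⟨h1, h2⟩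
      have a0 : (0 : ℝ) ≤ ((a : ℕ) : ℝ) := by positivity
      have x0 : 0 ≤ x := by
        by_contra hx
        push Not at hx
        nlinarith
      have x1 : x < 1 := by
        by_contra hx
        push Not at hx
        nlinarith
      refine ⟨?_, x0, x1⟩
      rw [key x0 x1, Nat.floor_eq_iff (by positivity)]
      exact ⟨h1, h2⟩
  rw [this, Real.volume_Ico]
  have : ((a : ℝ) + 1) / n - a / n = (n : ℝ)⁻¹ := by field_simp; ring
  rw [this, ENNReal.ofReal_inv_of_pos hn, ENNReal.ofReal_natCast]

instance unif01 : IsProbabilityMeasure (volume.restrict (Set.Icc (0 : ℝ) 1)) :=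
  ⟨by simp⟩

instance unifCube_prob (N : ℕ) : IsProbabilityMeasure (unifCube N) := by
  unfold unifCube; infer_instance

noncomputable def cells (n : ℕ) [NeZero n] {N : ℕ} (X : Fin N → ℝ) : Fin N → Fin n :=
  fun i => cell n (X i)

theorem cells_mp (n N : ℕ) [NeZero n] : MeasurePreserving (cells n) (unifCube N) (Pf n N) :=
  measurePreserving_pi _ _ (fun _ => cell_mp n)

theorem unifCube_ae (N : ℕ) : ∀ᵐ X ∂(unifCube N), ∀ i, X i ∈ Set.Icc (0 : ℝ) 1 := by
  have h : unifCube N = (Measure.pi fun _ => volume).restrict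
      (Set.univ.pi fun _ : Fin N => Set.Icc (0 : ℝ) 1) := by
    rw [Measure.restrict_pi_pi]; rfl
  rw [h]
  filter_upwards [ae_restrict_mem
    (MeasurableSet.pi Set.countable_univ fun _ _ => measurableSet_Icc)] with X hX i
  exact hX i trivial

noncomputable def im {n N : ℕ} (f : Fin N → Fin n) : Finset ℕ :=
  (Finset.univ.image f).map Fin.valEmbedding

theorem mem_im {n N : ℕ} {f : Fin N → Fin n} {x : ℕ} : x ∈ im f ↔ ∃ i, (f i : ℕ) = x := by
  simp [im]

theorem card_im {n N : ℕ} (f : Fin N → Fin n) : (im f).card = (Finset.univ.image f).card := by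
  simp [im]

theorem mm_lower {n N r : ℕ} [NeZero n] {s : ℝ} (hs : (r : ℝ) + 1 < n * s) {X Y : Fin N → ℝ}
    (hX : ∀ i, X i ∈ Set.Icc (0 : ℝ) 1) (hY : ∀ i, Y i ∈ Set.Icc (0 : ℝ) 1) :
    MM r (im (cells n X)) (im (cells n Y)) ≤ mmSize s X Y := by
  obtain ⟨P, hP, hc⟩ := MM_exists r (im (cells n X)) (im (cells n Y))
  rw [← hc, le_mmSize_iff]
  have hn : (0 : ℝ) < n := by exact_mod_cast NeZero.pos n
  let e : Fin P.card ≃ P := P.equivFin.symm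
  have h1 : ∀ k, ∃ i, (cells n X i : ℕ) = (e k).1.1 := fun k => mem_im.1 (hP.1 _ (e k).2).1
  have h2 : ∀ k, ∃ i, (cells n Y i : ℕ) = (e k).1.2 := fun k => mem_im.1 (hP.1 _ (e k).2).2.1
  choose σ hσ using h1
  choose τ hτ using h2
  refine ⟨σ, τ, ?_, ?_, ?_⟩
  · intro k l hkl
    apply e.injective
    apply Subtype.ext
    apply hP.2.1 _ (e k).2 _ (e l).2
    rw [← hσ, ← hσ, hkl]
  · intro k l hkl
    apply e.injective
    apply Subtype.ext
    apply hP.2.2 _ (e k).2 _ (e l).2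
    rw [← hτ, ← hτ, hkl]
  · intro k
    obtain ⟨-, -, h3, h4⟩ := hP.1 _ (e k).2
    rw [← hσ, ← hτ] at h3 h4
    have b1 := cell_bounds (n := n) (hX (σ k))
    have b2 := cell_bounds (n := n) (hY (τ k))
    have h3' : ((cell n (X (σ k)) : ℕ) : ℝ) ≤ (cell n (Y (τ k)) : ℕ) + r := by exact_mod_cast h3
    have h4' : ((cell n (Y (τ k)) : ℕ) : ℝ) ≤ (cell n (X (σ k)) : ℕ) + r := by exact_mod_cast h4
    rw [abs_lt]
    constructor
    · by_contra h; push Not at h; nlinarith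
    · by_contra h; push Not at h; nlinarith

theorem exists_reps {n N : ℕ} (f : Fin N → Fin n) : ∃ A : Finset (Fin N),
    Set.InjOn f A ∧ (Aᶜ).card + (im f).card ≤ N := by
  classical
  choose s hs using fun y : Finset.univ.image f => Finset.mem_image.1 y.2
  refine ⟨Finset.univ.image s, ?_, ?_⟩
  · intro i hi j hj hij
    obtain ⟨y, -, rfl⟩ := Finset.mem_image.1 hi
    obtain ⟨z, -, rfl⟩ := Finset.mem_image.1 hj
    rw [(hs y).2, (hs z).2] at hij
    rw [Subtype.ext hij]
  · have h1 : (Finset.univ.image s).card = (im f).card := by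
      rw [Finset.card_image_of_injective, Finset.card_univ, Fintype.card_coe, card_im]
      intro y z h
      apply Subtype.ext
      rw [← (hs y).2, ← (hs z).2, h]
    rw [← h1, Finset.card_compl, Fintype.card_fin]
    have := Finset.card_le_univ (Finset.univ.image s)
    rw [Fintype.card_fin] at this
    omega

theorem mm_upper {n N r : ℕ} [NeZero n] {s : ℝ} (hs : n * s ≤ r) {X Y : Fin N → ℝ}
    (hX : ∀ i, X i ∈ Set.Icc (0 : ℝ) 1) (hY : ∀ i, Y i ∈ Set.Icc (0 : ℝ) 1) :
    mmSize s X Y + (im (cells n X)).card + (im (cells n Y)).card ≤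
      MM r (im (cells n X)) (im (cells n Y)) + N + N := by
  classical
  have hn : (0 : ℝ) < n := by exact_mod_cast NeZero.pos n
  obtain ⟨σ, τ, hσ, hτ, hc⟩ := mmSize_mem s X Y
  obtain ⟨A, hA, hA'⟩ := exists_reps (cells n X)
  obtain ⟨B, hB, hB'⟩ := exists_reps (cells n Y)
  set G := Finset.univ.filter (fun k => σ k ∈ A ∧ τ k ∈ B) with hG
  set P := G.image (fun k => ((cells n X (σ k) : ℕ), (cells n Y (τ k) : ℕ))) with hPdef
  have i1 : ∀ k ∈ G, ∀ l ∈ G, (cells n X (σ k) : ℕ) = cells n X (σ l) → k = l := by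
    intro k hk l hl h
    exact hσ (hA (Finset.mem_filter.1 hk).2.1 (Finset.mem_filter.1 hl).2.1 (Fin.ext h))
  have i2 : ∀ k ∈ G, ∀ l ∈ G, (cells n Y (τ k) : ℕ) = cells n Y (τ l) → k = l := by
    intro k hk l hl h
    exact hτ (hB (Finset.mem_filter.1 hk).2.2 (Finset.mem_filter.1 hl).2.2 (Fin.ext h))
  have hP : IsM r (im (cells n X)) (im (cells n Y)) P := by
    refine ⟨?_, ?_, ?_⟩
    · intro e he
      obtain ⟨k, hk, rfl⟩ := Finset.mem_image.1 he
      refine ⟨mem_im.2 ⟨_, rfl⟩, mem_im.2 ⟨_, rfl⟩, ?_⟩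
      have b1 := cell_bounds (n := n) (hX (σ k))
      have b2 := cell_bounds (n := n) (hY (τ k))
      have hck := abs_lt.1 (hc k)
      have u1 : ((cell n (X (σ k)) : ℕ) : ℝ) < ((cell n (Y (τ k)) + r + 1 : ℕ) : ℝ) := by
        push_cast; nlinarith
      have u2 : ((cell n (Y (τ k)) : ℕ) : ℝ) < ((cell n (X (σ k)) + r + 1 : ℕ) : ℝ) := by
        push_cast; nlinarith
      exact ⟨Nat.lt_succ_iff.1 (by exact_mod_cast u1), Nat.lt_succ_iff.1 (by exact_mod_cast u2)⟩
    · intro e he f hf hef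
      obtain ⟨k, hk, rfl⟩ := Finset.mem_image.1 he
      obtain ⟨l, hl, rfl⟩ := Finset.mem_image.1 hf
      rw [i1 k hk l hl hef]
    · intro e he f hf hef
      obtain ⟨k, hk, rfl⟩ := Finset.mem_image.1 he
      obtain ⟨l, hl, rfl⟩ := Finset.mem_image.1 hf
      rw [i2 k hk l hl hef]
  have hPc : P.card = G.card := by
    apply Finset.card_image_of_injOn
    intro k hk l hl h
    exact i1 k hk l hl (congrArg Prod.fst h)
  have h1 := hP.card_le
  have h2 : Gᶜ.card ≤ Aᶜ.card + Bᶜ.card := by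
    have : Gᶜ ⊆ Finset.univ.filter (fun k => σ k ∈ Aᶜ) ∪ Finset.univ.filter (fun k => τ k ∈ Bᶜ) := by
      intro k
      simp only [hG, Finset.mem_compl, Finset.mem_filter, Finset.mem_univ, true_and,
        Finset.mem_union]
      tauto
    refine (Finset.card_le_card this).trans ((Finset.card_union_le _ _).trans (add_le_add ?_ ?_))
    · exact Finset.card_le_card_of_injOn σ (fun k hk => (Finset.mem_filter.1 hk).2) hσ.injOn
    · exact Finset.card_le_card_of_injOn τ (fun k hk => (Finset.mem_filter.1 hk).2) hτ.injOn
  have h3 := Finset.card_add_card_compl G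
  rw [Fintype.card_fin] at h3
  omega

theorem MM_abs (r : ℕ) {S T : Finset ℕ} (B : Finset ℕ) (h : S ⊆ T) :
    |(MM r T B : ℝ) - MM r S B| ≤ (T.card : ℝ) - S.card := by
  have h1 : (MM r S B : ℝ) ≤ MM r T B := by exact_mod_cast MM_mono_left r B h
  have h2 : (MM r T B : ℝ) + S.card ≤ MM r S B + T.card := by exact_mod_cast MM_lip_left r B h
  rw [abs_of_nonneg (by linarith)]
  linarith

theorem bs_abs {p : ℝ} (h0 : 0 ≤ p) (h1 : p ≤ 1) (n : ℕ) {g g' : Finset ℕ → ℝ} {a : ℝ}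
    (h : ∀ S, |g S - g' S| ≤ a) : |bs p n g - bs p n g'| ≤ a := by
  rw [abs_le]
  constructor
  · have := bs_mono h0 h1 n (g := fun S => g' S + -a) (g' := g)
      (fun S _ => by have := abs_le.1 (h S); linarith)
    rw [bs_add, bs_const] at this
    linarith
  · have := bs_mono h0 h1 n (g := g) (g' := fun S => g' S + a)
      (fun S _ => by have := abs_le.1 (h S); linarith)
    rw [bs_add, bs_const] at this
    linarith

theorem compare2 {n N : ℕ} [NeZero n] (r : ℕ) (hNn : N ≤ n) {p : ℝ} (h0 : 0 ≤ p) (h1 : p ≤ 1)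
    (hN : (n : ℝ) * p = N) {t : ℝ} (ht : 0 < t) :
    |∫ ω, (MM r (im ω.1) (im ω.2) : ℝ) ∂((Pf n N).prod (Pf n N)) - VV r p n n| ≤
      2 * ((N : ℝ) ^ 2 / n + (t + N / t)) := by
  rw [integral_prod _ Integrable.of_finite]
  simp only
  have e1 : |∫ f, bs p n (fun T => (MM r (im f) T : ℝ)) ∂(Pf n N) - VV r p n n| ≤
      (N : ℝ) ^ 2 / n + (t + N / t) := by
    refine compare hNn h0 h1 hN ht (fun S => bs p n (fun T => (MM r S T : ℝ))) ?_
    intro S T hST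
    exact bs_abs h0 h1 n fun B => MM_abs r B hST
  have e2 : |∫ f, (∫ g, (MM r (im f) (im g) : ℝ) ∂(Pf n N)) ∂(Pf n N) -
      ∫ f, bs p n (fun T => (MM r (im f) T : ℝ)) ∂(Pf n N)| ≤
      (N : ℝ) ^ 2 / n + (t + N / t) := by
    rw [← integral_sub Integrable.of_finite Integrable.of_finite]
    refine (abs_integral_le_integral_abs).trans ?_
    have hc : ∫ f : Fin N → Fin n, ((N : ℝ) ^ 2 / n + (t + N / t)) ∂(Pf n N) =
      (N : ℝ) ^ 2 / n + (t + N / t) := by simp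
    rw [← hc]
    refine integral_mono Integrable.of_finite Integrable.of_finite fun f => ?_
    refine compare hNn h0 h1 hN ht (fun T => (MM r (im f) T : ℝ)) ?_
    intro S T hST
    simp only [MM_comm r (im f)]
    exact MM_abs r _ hST
  have := abs_add_le (∫ f, (∫ g, (MM r (im f) (im g) : ℝ) ∂(Pf n N)) ∂(Pf n N) -
      ∫ f, bs p n (fun T => (MM r (im f) T : ℝ)) ∂(Pf n N))
    (∫ f, bs p n (fun T => (MM r (im f) T : ℝ)) ∂(Pf n N) - VV r p n n)
  rw [sub_add_sub_cancel] at this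
  linarith

theorem integral_cells {n N : ℕ} [NeZero n] (g : (Fin N → Fin n) × (Fin N → Fin n) → ℝ) :
    ∫ ω, g (cells n ω.1, cells n ω.2) ∂((unifCube N).prod (unifCube N)) =
      ∫ ω, g ω ∂((Pf n N).prod (Pf n N)) := by
  have h := (cells_mp n N).prod (cells_mp n N)
  rw [← h.map_eq, integral_map h.measurable.aemeasurable
    (measurable_of_finite _).aestronglyMeasurable]
  rfl

theorem integrable_cells {n N : ℕ} [NeZero n] (g : (Fin N → Fin n) × (Fin N → Fin n) → ℝ) :
    Integrable (fun ω : (Fin N → ℝ) × (Fin N → ℝ) => g (cells n ω.1, cells n ω.2))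
      ((unifCube N).prod (unifCube N)) := by
  have h := (cells_mp n N).prod (cells_mp n N)
  exact h.integrable_comp_of_integrable (g := g) Integrable.of_finite

theorem integrable_mm (N : ℕ) (s : ℝ) :
    Integrable (fun ω : (Fin N → ℝ) × (Fin N → ℝ) => (mmSize s ω.1 ω.2 : ℝ))
      ((unifCube N).prod (unifCube N)) := by
  refine Integrable.of_bound
    (measurable_from_top.comp (measurable_mmSize s N N)).aestronglyMeasurable N ?_
  refine Filter.Eventually.of_forall fun ω => ?_
  rw [Real.norm_of_nonneg (by positivity)]
  exact_mod_cast mmSize_le s ω.1 ω.2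

theorem ae_cube2 (N : ℕ) : ∀ᵐ ω ∂((unifCube N).prod (unifCube N)),
    (∀ i, ω.1 i ∈ Set.Icc (0 : ℝ) 1) ∧ (∀ i, ω.2 i ∈ Set.Icc (0 : ℝ) 1) :=
  (Measure.quasiMeasurePreserving_fst.ae (unifCube_ae N)).and
    (Measure.quasiMeasurePreserving_snd.ae (unifCube_ae N))

theorem E_lower {n N r : ℕ} [NeZero n] {s : ℝ} (hs : (r : ℝ) + 1 < n * s) :
    ∫ ω, (MM r (im ω.1) (im ω.2) : ℝ) ∂((Pf n N).prod (Pf n N)) ≤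
      ∫ ω, (mmSize s ω.1 ω.2 : ℝ) ∂((unifCube N).prod (unifCube N)) := by
  rw [← integral_cells]
  refine integral_mono_ae (integrable_cells fun ω => (MM r (im ω.1) (im ω.2) : ℝ))
    (integrable_mm N s) ?_
  filter_upwards [ae_cube2 N] with ω hω
  exact_mod_cast mm_lower hs hω.1 hω.2

theorem E_upper {n N r : ℕ} [NeZero n] {s : ℝ} (hs : n * s ≤ r) :
    ∫ ω, (mmSize s ω.1 ω.2 : ℝ) ∂((unifCube N).prod (unifCube N)) ≤
    ∫ ω, (MM r (im ω.1) (im ω.2) : ℝ) ∂((Pf n N).prod (Pf n N)) + 2 * ((N : ℝ) ^ 2 / n) := by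
  have h1 : ∫ ω, ((N : ℝ) - (im ω.1).card) ∂((Pf n N).prod (Pf n N)) ≤ (N : ℝ) ^ 2 / n := by
    rw [integral_fun_fst (fun f : Fin N → Fin n => (N : ℝ) - (im f).card)]
    simp only [card_im]
    simpa using collision (n := n) (N := N)
  have h2 : ∫ ω, ((N : ℝ) - (im ω.2).card) ∂((Pf n N).prod (Pf n N)) ≤ (N : ℝ) ^ 2 / n := by
    rw [integral_fun_snd (fun f : Fin N → Fin n => (N : ℝ) - (im f).card)]
    simp only [card_im]
    simpa using collision (n := n) (N := N)
  have h3 : ∫ ω, (mmSize s ω.1 ω.2 : ℝ) ∂((unifCube N).prod (unifCube N)) ≤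
      ∫ ω, ((MM r (im ω.1) (im ω.2) : ℝ) + (((N : ℝ) - (im ω.1).card) + ((N : ℝ) - (im ω.2).card)))
        ∂((Pf n N).prod (Pf n N)) := by
    rw [← integral_cells]
    refine integral_mono_ae (integrable_mm N s) (integrable_cells fun ω =>
      ((MM r (im ω.1) (im ω.2) : ℝ) + (((N : ℝ) - (im ω.1).card) + ((N : ℝ) - (im ω.2).card)))) ?_
    filter_upwards [ae_cube2 N] with ω hω
    have := mm_upper hs hω.1 hω.2
    have h' : ((mmSize s ω.1 ω.2 + (im (cells n ω.1)).card + (im (cells n ω.2)).card : ℕ) : ℝ) ≤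
      ((MM r (im (cells n ω.1)) (im (cells n ω.2)) + N + N : ℕ) : ℝ) := by exact_mod_cast this
    push_cast at h'
    linarith
  rw [integral_add Integrable.of_finite Integrable.of_finite,
    integral_add Integrable.of_finite Integrable.of_finite] at h3
  linarith


/-! Part 4 -/

theorem err_small (C : ℝ) {δ : ℝ} (hδ : 0 < δ) :
    ∀ᶠ N : ℕ in Filter.atTop, C / N + 4 / √(N : ℝ) ≤ δ := by
  have h1 : Filter.Tendsto (fun N : ℕ => C / (N : ℝ)) Filter.atTop (nhds 0) :=
    tendsto_const_div_atTop_nhds_zero_nat C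
  have h2 : Filter.Tendsto (fun N : ℕ => 4 / √(N : ℝ)) Filter.atTop (nhds 0) :=
    Filter.Tendsto.const_div_atTop
      (Real.tendsto_sqrt_atTop.comp tendsto_natCast_atTop_atTop) 4
  have h3 := h1.add h2
  rw [add_zero] at h3
  exact (h3.eventually (gt_mem_nhds hδ)).mono fun N h => h.le

theorem core (r K : ℕ) (hK : 0 < K) : ∃ C : ℝ, ∀ N : ℕ, ∀ [NeZero (K * N)],
    |(∫ ω, (MM r (im ω.1) (im ω.2) : ℝ) ∂((Pf (K * N) N).prod (Pf (K * N) N))) / N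
      - (2 * r + 1) / (K + 2 * r)| ≤ 2 / K + (C / N + 4 / √(N : ℝ)) := by
  have hK' : (0 : ℝ) < K := by exact_mod_cast hK
  have hK1 : (1 : ℝ) ≤ K := by exact_mod_cast hK
  obtain ⟨C, hC⟩ := VV_bound r (p := 1 / (K : ℝ)) (by positivity)
    (by rw [div_le_one hK']; exact hK1)
  refine ⟨C, fun N _ => ?_⟩
  have hN : 0 < N := Nat.pos_of_ne_zero fun h => NeZero.ne (K * N) (by simp [h])
  have hN' : (0 : ℝ) < N := by exact_mod_cast hN
  have hs : 0 < √(N : ℝ) := Real.sqrt_pos.2 hN'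
  have hss : √(N : ℝ) * √(N : ℝ) = N := Real.mul_self_sqrt hN'.le
  have h1 := compare2 (n := K * N) (N := N) r (Nat.le_mul_of_pos_left N hK)
    (p := 1 / (K : ℝ)) (by positivity) (by rw [div_le_one hK']; exact hK1)
    (by push_cast; field_simp) hs
  have h2 := hC (K * N)
  have e1 : (1 / (K : ℝ)) ^ 2 * (2 * r + 1) / (1 + 2 * r * (1 / (K : ℝ))) * ((K * N : ℕ) : ℝ) =
      (2 * r + 1) / (K + 2 * r) * N := by push_cast; field_simp
  rw [e1] at h2
  have e2 : (N : ℝ) / √(N : ℝ) = √(N : ℝ) := by rw [div_eq_iff hs.ne', hss]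
  have e3 : (N : ℝ) ^ 2 / ((K * N : ℕ) : ℝ) = N / K := by push_cast; field_simp
  rw [e2, e3] at h1
  generalize (∫ ω, (MM r (im ω.1) (im ω.2) : ℝ) ∂((Pf (K * N) N).prod (Pf (K * N) N))) = I at *
  generalize VV r (1 / (K : ℝ)) (K * N) (K * N) = V at *
  have h3 : |I - (2 * r + 1) / (K + 2 * r) * N| ≤ 2 * (N / K + (√(N : ℝ) + √(N : ℝ))) + C := by
    have := abs_add_le (I - V) (V - (2 * r + 1) / (K + 2 * r) * N)
    rw [sub_add_sub_cancel] at this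
    linarith
  have e4 : I / N - (2 * r + 1) / (K + 2 * r) = (I - (2 * r + 1) / (K + 2 * r) * N) / N := by
    field_simp
  rw [e4, abs_div, abs_of_pos hN', div_le_iff₀ hN']
  refine h3.trans (le_of_eq ?_)
  have e5 : 4 / √(N : ℝ) * N = 4 * √(N : ℝ) := by rw [div_mul_eq_mul_div, mul_div_assoc, e2]
  have e6 : (2 / K + (C / N + 4 / √(N : ℝ))) * N = 2 * (N / K) + C / N * N + 4 / √(N : ℝ) * N := by
    ring
  rw [e6, e5, div_mul_cancel₀ _ hN'.ne']
  ring

noncomputable def EE (c : ℝ) (N : ℕ) : ℝ :=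
  (∫ ω, (mmSize (c / N) ω.1 ω.2 : ℝ) ∂((unifCube N).prod (unifCube N))) / N

theorem EE_lower {c : ℝ} (r K : ℕ) (hK : 0 < K) (hr : (r : ℝ) + 1 < K * c) {δ : ℝ} (hδ : 0 < δ) :
    ∀ᶠ N : ℕ in Filter.atTop, (2 * r + 1) / (K + 2 * r) - 2 / K - δ ≤ EE c N := by
  obtain ⟨C, hC⟩ := core r K hK
  filter_upwards [err_small C hδ, Filter.eventually_gt_atTop 0] with N h1 h2
  have : NeZero (K * N) := ⟨by positivity⟩
  have hN' : (0 : ℝ) < N := by exact_mod_cast h2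
  have h3 := abs_le.1 (hC N)
  have h4 := E_lower (n := K * N) (N := N) (r := r) (s := c / N)
    (by push_cast; rw [mul_assoc, mul_div_cancel₀ _ hN'.ne']; exact hr)
  have h5 := div_le_div_of_nonneg_right h4 hN'.le
  unfold EE
  linarith

theorem EE_upper {c : ℝ} (r K : ℕ) (hK : 0 < K) (hr : K * c ≤ r) {δ : ℝ} (hδ : 0 < δ) :
    ∀ᶠ N : ℕ in Filter.atTop, EE c N ≤ (2 * r + 1) / (K + 2 * r) + 4 / K + δ := by
  obtain ⟨C, hC⟩ := core r K hK
  filter_upwards [err_small C hδ, Filter.eventually_gt_atTop 0] with N h1 h2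
  have : NeZero (K * N) := ⟨by positivity⟩
  have hN' : (0 : ℝ) < N := by exact_mod_cast h2
  have hK' : (0 : ℝ) < K := by exact_mod_cast hK
  have h3 := abs_le.1 (hC N)
  have h4 := E_upper (n := K * N) (N := N) (r := r) (s := c / N)
    (by push_cast; rw [mul_assoc, mul_div_cancel₀ _ hN'.ne']; exact hr)
  have h5 := div_le_div_of_nonneg_right h4 hN'.le
  have e3 : 2 * ((N : ℝ) ^ 2 / ((K * N : ℕ) : ℝ)) / N = 2 / K := by push_cast; field_simp
  rw [add_div, e3] at h5
  have e4 : (4 : ℝ) / K = 2 / K + 2 / K := by ring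
  unfold EE
  linarith

theorem ratio_lim {c : ℝ} (hc : 0 < c) (r : ℕ → ℕ)
    (h : Filter.Tendsto (fun K : ℕ => (r K : ℝ) / K) Filter.atTop (nhds c)) :
    Filter.Tendsto (fun K : ℕ => (2 * (r K : ℝ) + 1) / (K + 2 * r K)) Filter.atTop
      (nhds (c / (c + 1 / 2))) := by
  have h1 : Filter.Tendsto (fun K : ℕ => (1 : ℝ) / K) Filter.atTop (nhds 0) :=
    tendsto_const_div_atTop_nhds_zero_nat 1
  have h2 := ((h.const_mul 2).add h1).div ((h.const_mul 2).const_add 1) (by positivity)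
  have e : (2 * c + 0) / (1 + 2 * c) = c / (c + 1 / 2) := by field_simp; ring
  rw [e] at h2
  refine h2.congr' ?_
  filter_upwards [Filter.eventually_gt_atTop 0] with K hK
  have hK' : (0 : ℝ) < K := by exact_mod_cast hK
  simp only [Pi.div_apply]
  field_simp

theorem EE_tendsto (c : ℝ) (hc : 0 < c) :
    Filter.Tendsto (EE c) Filter.atTop (nhds (c / (c + 1 / 2))) := by
  have hinv : ∀ a : ℝ, Filter.Tendsto (fun K : ℕ => a / (K : ℝ)) Filter.atTop (nhds 0) :=
    fun a => tendsto_const_div_atTop_nhds_zero_nat a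
  have hcast : Filter.Tendsto (fun K : ℕ => (K : ℝ)) Filter.atTop Filter.atTop :=
    tendsto_natCast_atTop_atTop
  have hfl : Filter.Tendsto (fun K : ℕ => (⌊c * (K : ℝ)⌋₊ : ℝ) / K) Filter.atTop (nhds c) :=
    (tendsto_nat_floor_mul_div_atTop hc.le).comp hcast
  have hce : Filter.Tendsto (fun K : ℕ => (⌈c * (K : ℝ)⌉₊ : ℝ) / K) Filter.atTop (nhds c) :=
    (tendsto_nat_ceil_mul_div_atTop hc.le).comp hcast
  have hbig : ∀ᶠ K : ℕ in Filter.atTop, 2 ≤ ⌊c * (K : ℝ)⌋₊ := by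
    have := (hcast.const_mul_atTop hc).eventually_ge_atTop 2
    filter_upwards [this] with K hK
    exact Nat.le_floor (by exact_mod_cast hK)
  have hfl2 : Filter.Tendsto (fun K : ℕ => ((⌊c * (K : ℝ)⌋₊ - 2 : ℕ) : ℝ) / K) Filter.atTop
      (nhds c) := by
    have := hfl.sub (hinv 2)
    rw [sub_zero] at this
    refine this.congr' ?_
    filter_upwards [hbig] with K hK
    rw [Nat.cast_sub hK, sub_div]; norm_num
  have hlo := (ratio_lim hc _ hfl2).sub (hinv 2)
  have hup := (ratio_lim hc _ hce).add (hinv 4)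
  rw [sub_zero] at hlo
  rw [add_zero] at hup
  rw [Metric.tendsto_atTop']
  intro ε hε
  have hε2 : 0 < ε / 2 := by positivity
  obtain ⟨K, h1, h2, h3, hK⟩ := ((hlo.eventually (lt_mem_nhds (sub_lt_self _ hε2))).and
    ((hup.eventually (gt_mem_nhds (lt_add_of_pos_right _ hε2))).and
      (hbig.and (Filter.eventually_gt_atTop 0)))).exists
  have hK' : (0 : ℝ) < K := by exact_mod_cast hK
  have l := EE_lower (c := c) (⌊c * (K : ℝ)⌋₊ - 2) K hK (by
    rw [Nat.cast_sub h3]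
    have := Nat.floor_le (show 0 ≤ c * (K : ℝ) by positivity)
    push_cast
    linarith) (δ := ε / 4) (by positivity)
  have u := EE_upper (c := c) (⌈c * (K : ℝ)⌉₊) K hK (by
    rw [mul_comm]; exact Nat.le_ceil _) (δ := ε / 4) (by positivity)
  obtain ⟨N₀, hN₀⟩ := Filter.eventually_atTop.1 (l.and u)
  refine ⟨N₀, fun N hN => ?_⟩
  obtain ⟨a1, a2⟩ := hN₀ N hN.le
  rw [Real.dist_eq, abs_lt]
  constructor <;> linarith

/-- `lim_{N→∞} E[m*(c,N)] / N = c / (c + 1/2)`. -/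
theorem stmt3 (c : ℝ) (hc : 0 < c) :
    Filter.Tendsto
      (fun N : ℕ =>
        (∫ ω, (mmSize (c / N) ω.1 ω.2 : ℝ) ∂((unifCube N).prod (unifCube N))) / N)
      Filter.atTop (nhds (c / (c + 1/2))) := by
  exact EE_tendsto c hc
end

section
/- Fix c > 0. Define μ : ℝ → ℝ by μ(x) = 1/(2c+2) if |x| ≤ c and μ(x) = e^{−(|x|−c)}/(2c+2) if |x| > c, and define the transition density Π : ℝ × ℝ → ℝ, where Π(y, x) is the density of the next state x given current state y, by: Π(y, x) = (1/2)·e^{−|x−y|} if |y| ≤ c; Π(y, x) = e^{−(x−y)}·1_{x > y} if y < −c; and Π(y, x) = e^{−(y−x)}·1_{x < y} if y > c. Then μ is a probability density (μ ≥ 0 and ∫_ℝ μ(x) dx = 1) and μ is stationary for Π: for every x ∈ ℝ, ∫_ℝ Π(y, x)·μ(y) dy = μ(x). -/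
open MeasureTheory

/-- The stationary density: `1/(2c+2)` on `[-c, c]` and `e^{-(|x|-c)}/(2c+2)` outside. -/
noncomputable def statDens (c : ℝ) (x : ℝ) : ℝ :=
  if |x| ≤ c then 1 / (2 * c + 2) else Real.exp (-(|x| - c)) / (2 * c + 2)

/-- The transition density `Π(y, x)`: density of the next state `x` given the current
state `y`.  From `|y| ≤ c` the increment is `E₁ - E₂`; from `y < -c` it is `+E₁`; from
`y > c` it is `-E₁`, where `E₁, E₂` are independent rate-one exponentials. -/
noncomputable def transDens (c : ℝ) (y x : ℝ) : ℝ :=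
  if |y| ≤ c then (1 / 2) * Real.exp (-|x - y|)
  else if y < -c then (if y < x then Real.exp (-(x - y)) else 0)
  else (if x < y then Real.exp (-(y - x)) else 0)

theorem piece_left (f : ℝ → ℝ) (k A p : ℝ) (hk : 0 < k)
    (h : ∀ y, y < p → f y = A * Real.exp (k * y)) :
    IntegrableOn f (Set.Iic p) ∧ ∫ y in Set.Iic p, f y = A * Real.exp (k * p) / k := by
  have hg : IntegrableOn (fun y => A * Real.exp (k * y)) (Set.Iic p) :=
    (integrableOn_exp_mul_Iic hk p).const_mul A
  constructor
  · rw [integrableOn_Iic_iff_integrableOn_Iio] at hg ⊢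
    exact hg.congr_fun (fun y hy => (h y hy).symm) measurableSet_Iio
  · rw [integral_Iic_eq_integral_Iio,
      setIntegral_congr_fun measurableSet_Iio (fun y hy => h y hy),
      ← integral_Iic_eq_integral_Iio, integral_const_mul, integral_exp_mul_Iic hk]
    ring

theorem piece_right (f : ℝ → ℝ) (k A p : ℝ) (hk : 0 < k)
    (h : ∀ y, p < y → f y = A * Real.exp (-k * y)) :
    IntegrableOn f (Set.Ioi p) ∧ ∫ y in Set.Ioi p, f y = A * Real.exp (-k * p) / k := by
  have hk' : -k < 0 := by linarith
  have hg : IntegrableOn (fun y => A * Real.exp (-k * y)) (Set.Ioi p) :=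
    (integrableOn_exp_mul_Ioi hk' p).const_mul A
  constructor
  · exact hg.congr_fun (fun y hy => (h y hy).symm) measurableSet_Ioi
  · rw [setIntegral_congr_fun measurableSet_Ioi (fun y hy => h y hy),
      integral_const_mul, integral_exp_mul_Ioi hk']
    field_simp

theorem piece_mid (f : ℝ → ℝ) (B1 B2 B3 p q : ℝ) (hpq : p ≤ q)
    (h : ∀ y, p < y → y < q → f y = B1 * Real.exp y + B2 * Real.exp (-y) + B3) :
    IntegrableOn f (Set.Ioc p q) ∧ ∫ y in Set.Ioc p q, f y =
      B1 * (Real.exp q - Real.exp p) + B2 * (Real.exp (-p) - Real.exp (-q)) + B3 * (q - p) := by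
  have hc : Continuous (fun y : ℝ => B1 * Real.exp y + B2 * Real.exp (-y) + B3) := by fun_prop
  have hg : IntegrableOn (fun y => B1 * Real.exp y + B2 * Real.exp (-y) + B3) (Set.Ioc p q) :=
    (hc.intervalIntegrable p q).1
  constructor
  · rw [integrableOn_Ioc_iff_integrableOn_Ioo] at hg ⊢
    exact hg.congr_fun (fun y hy => (h y hy.1 hy.2).symm) measurableSet_Ioo
  · rw [integral_Ioc_eq_integral_Ioo,
      setIntegral_congr_fun measurableSet_Ioo (fun y hy => h y hy.1 hy.2),
      ← integral_Ioc_eq_integral_Ioo, ← intervalIntegral.integral_of_le hpq,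
      intervalIntegral.integral_eq_sub_of_hasDerivAt
        (f := fun y => B1 * Real.exp y - B2 * Real.exp (-y) + B3 * y) _
        (hc.intervalIntegrable p q)]
    · ring
    · intro y _
      have h1 := (Real.hasDerivAt_exp y).const_mul B1
      have h2 := ((hasDerivAt_neg y).exp).const_mul B2
      have h3 := (hasDerivAt_id y).const_mul B3
      refine ((h1.sub h2).add h3).congr_deriv ?_
      ring

theorem glue (f : ℝ → ℝ) (k A B1 B2 B3 C1 C2 C3 D p q r : ℝ) (hk : 0 < k)
    (hpq : p ≤ q) (hqr : q ≤ r)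
    (h1 : ∀ y, y < p → f y = A * Real.exp (k * y))
    (h2 : ∀ y, p < y → y < q → f y = B1 * Real.exp y + B2 * Real.exp (-y) + B3)
    (h3 : ∀ y, q < y → y < r → f y = C1 * Real.exp y + C2 * Real.exp (-y) + C3)
    (h4 : ∀ y, r < y → f y = D * Real.exp (-k * y)) :
    ∫ y, f y = A * Real.exp (k * p) / k +
      ((B1 * (Real.exp q - Real.exp p) + B2 * (Real.exp (-p) - Real.exp (-q)) + B3 * (q - p)) +
      ((C1 * (Real.exp r - Real.exp q) + C2 * (Real.exp (-q) - Real.exp (-r)) + C3 * (r - q)) +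
      D * Real.exp (-k * r) / k)) := by
  obtain ⟨i1, e1⟩ := piece_left f k A p hk h1
  obtain ⟨i2, e2⟩ := piece_mid f B1 B2 B3 p q hpq h2
  obtain ⟨i3, e3⟩ := piece_mid f C1 C2 C3 q r hqr h3
  obtain ⟨i4, e4⟩ := piece_right f k D r hk h4
  have d34 : Disjoint (Set.Ioc q r) (Set.Ioi r) :=
    Set.disjoint_left.2 fun y hy hy' => absurd hy' (not_lt.2 hy.2)
  have d23 : Disjoint (Set.Ioc p q) (Set.Ioi q) :=
    Set.disjoint_left.2 fun y hy hy' => absurd hy' (not_lt.2 hy.2)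
  have d12 : Disjoint (Set.Iic p) (Set.Ioi p) :=
    Set.disjoint_left.2 fun y hy hy' => absurd hy' (not_lt.2 (Set.mem_Iic.1 hy))
  have i34 := i3.union i4
  have e34 := setIntegral_union d34 measurableSet_Ioi i3 i4
  rw [Set.Ioc_union_Ioi_eq_Ioi hqr] at i34 e34
  have i24 := i2.union i34
  have e24 := setIntegral_union d23 measurableSet_Ioi i2 i34
  rw [Set.Ioc_union_Ioi_eq_Ioi hpq] at i24 e24
  have e := setIntegral_union d12 measurableSet_Ioi i1 i24
  rw [Set.Iic_union_Ioi, setIntegral_univ] at e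
  rw [e, e24, e34, e1, e2, e3, e4]

theorem statDens_neg (c x : ℝ) : statDens c (-x) = statDens c x := by
  simp [statDens]

theorem statDens_mid (c x : ℝ) (h1 : -c ≤ x) (h2 : x ≤ c) : statDens c x = 1 / (2 * c + 2) := by
  rw [statDens, if_pos (abs_le.2 ⟨h1, h2⟩)]

theorem statDens_right (c x : ℝ) (hc : 0 < c) (h : c < x) :
    statDens c x = Real.exp c * Real.exp (-x) / (2 * c + 2) := by
  have hx : |x| = x := abs_of_pos (hc.trans h)
  rw [statDens, hx, if_neg (not_le.2 h), ← Real.exp_add]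
  congr 2; ring

theorem statDens_left (c x : ℝ) (hc : 0 < c) (h : x < -c) :
    statDens c x = Real.exp c * Real.exp x / (2 * c + 2) := by
  rw [← statDens_neg, statDens_right c (-x) hc (by linarith), neg_neg]

theorem transDens_left (c y x : ℝ) (hc : 0 < c) (h : y < -c) (hx : y < x) :
    transDens c y x = Real.exp (-x) * Real.exp y := by
  have : ¬ |y| ≤ c := fun h' => by linarith [(abs_le.1 h').1]
  rw [transDens, if_neg this, if_pos h, if_pos hx, ← Real.exp_add]
  congr 1; ring

theorem transDens_right (c y x : ℝ) (hc : 0 < c) (h : c < y) :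
    transDens c y x = if x < y then Real.exp x * Real.exp (-y) else 0 := by
  have : ¬ |y| ≤ c := fun h' => by linarith [(abs_le.1 h').2]
  rw [transDens, if_neg this, if_neg (by linarith), ← Real.exp_add]
  congr 2; ring

theorem transDens_mid_lt (c y x : ℝ) (h1 : -c ≤ y) (h2 : y ≤ c) (h : y < x) :
    transDens c y x = (1 / 2) * (Real.exp (-x) * Real.exp y) := by
  rw [transDens, if_pos (abs_le.2 ⟨h1, h2⟩), abs_of_pos (by linarith), ← Real.exp_add]
  congr 2; ring

theorem transDens_mid_gt (c y x : ℝ) (h1 : -c ≤ y) (h2 : y ≤ c) (h : x < y) :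
    transDens c y x = (1 / 2) * (Real.exp x * Real.exp (-y)) := by
  rw [transDens, if_pos (abs_le.2 ⟨h1, h2⟩), abs_of_neg (by linarith), ← Real.exp_add]
  congr 2; ring

theorem transDens_neg (c y x : ℝ) (hc : 0 < c) : transDens c (-y) (-x) = transDens c y x := by
  have e : |-x - -y| = |x - y| := by rw [← abs_neg]; congr 1; ring
  have e1 : -(-x - -y) = -(y - x) := by ring
  have e2 : -(-y - -x) = -(x - y) := by ring
  simp only [transDens, abs_neg, e, e1, e2, neg_lt_neg_iff]
  by_cases h : |y| ≤ c
  · simp [h]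
  · simp only [h, if_false]
    rcases lt_abs.1 (not_le.1 h) with h' | h'
    · have h2 : ¬ y < -c := by linarith
      simp [h', h2]
    · have h2 : y < -c := by linarith
      have h3 : ¬ c < y := by linarith
      simp [h2, h3]

theorem exp_two_neg (y : ℝ) : Real.exp (-2 * y) = Real.exp (-y) * Real.exp (-y) := by
  rw [← Real.exp_add]; congr 1; ring

theorem exp_two (y : ℝ) : Real.exp (2 * y) = Real.exp y * Real.exp y := by
  rw [← Real.exp_add]; congr 1; ring

theorem total (c : ℝ) (hc : 0 < c) : ∫ x, statDens c x = 1 := by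
  rw [glue (statDens c) 1 (Real.exp c / (2 * c + 2)) 0 0 (1 / (2 * c + 2)) 0 0 (1 / (2 * c + 2))
    (Real.exp c / (2 * c + 2)) (-c) 0 c one_pos (by linarith) hc.le]
  · have : Real.exp c ≠ 0 := (Real.exp_pos c).ne'
    have : 2 * c + 2 ≠ 0 := by linarith
    simp only [one_mul, neg_mul, Real.exp_neg]
    field_simp
    ring
  · intro y hy
    rw [statDens_left c y hc hy, one_mul]; ring
  · intro y h1 h2
    rw [statDens_mid c y (by linarith) (by linarith)]; ring
  · intro y h1 h2
    rw [statDens_mid c y (by linarith) (by linarith)]; ring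
  · intro y hy
    rw [statDens_right c y hc hy, neg_mul, one_mul]; ring

theorem stat_mid (c x : ℝ) (hc : 0 < c) (hx1 : -c ≤ x) (hx2 : x ≤ c) :
    (∫ y, transDens c y x * statDens c y) = statDens c x := by
  rw [glue (fun y => transDens c y x * statDens c y) 2
    (Real.exp (-x) * Real.exp c / (2 * c + 2))
    (1 / 2 * Real.exp (-x) / (2 * c + 2)) 0 0
    0 (1 / 2 * Real.exp x / (2 * c + 2)) 0
    (Real.exp x * Real.exp c / (2 * c + 2)) (-c) x c two_pos hx1 hx2]
  · rw [statDens_mid c x hx1 hx2]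
    have : Real.exp c ≠ 0 := (Real.exp_pos c).ne'
    have : Real.exp x ≠ 0 := (Real.exp_pos x).ne'
    have : 2 * c + 2 ≠ 0 := by linarith
    simp only [exp_two_neg, exp_two, Real.exp_neg]
    field_simp
    ring
  · intro y hy
    rw [statDens_left c y hc hy, transDens_left c y x hc hy (by linarith), exp_two]; ring
  · intro y h1 h2
    rw [statDens_mid c y (by linarith) (by linarith),
      transDens_mid_lt c y x (by linarith) (by linarith) h2]; ring
  · intro y h1 h2
    rw [statDens_mid c y (by linarith) (by linarith),
      transDens_mid_gt c y x (by linarith) (by linarith) h1]; ring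
  · intro y hy
    rw [statDens_right c y hc hy, transDens_right c y x hc hy, if_pos (by linarith),
      exp_two_neg]; ring

theorem stat_right (c x : ℝ) (hc : 0 < c) (hx : c < x) :
    (∫ y, transDens c y x * statDens c y) = statDens c x := by
  rw [glue (fun y => transDens c y x * statDens c y) 2
    (Real.exp (-x) * Real.exp c / (2 * c + 2))
    (1 / 2 * Real.exp (-x) / (2 * c + 2)) 0 0
    0 0 0
    (Real.exp x * Real.exp c / (2 * c + 2)) (-c) c x two_pos (by linarith) hx.le]
  · rw [statDens_right c x hc hx]
    have : Real.exp c ≠ 0 := (Real.exp_pos c).ne'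
    have : Real.exp x ≠ 0 := (Real.exp_pos x).ne'
    have : 2 * c + 2 ≠ 0 := by linarith
    simp only [exp_two_neg, exp_two, Real.exp_neg]
    field_simp
    ring
  · intro y hy
    rw [statDens_left c y hc hy, transDens_left c y x hc hy (by linarith), exp_two]; ring
  · intro y h1 h2
    rw [statDens_mid c y (by linarith) (by linarith),
      transDens_mid_lt c y x (by linarith) (by linarith) (by linarith)]; ring
  · intro y h1 h2
    rw [transDens_right c y x hc h1, if_neg (by linarith)]; ring
  · intro y hy
    rw [statDens_right c y hc (by linarith), transDens_right c y x hc (by linarith),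
      if_pos hy, exp_two_neg]; ring

/-- `μ` is a probability density and is stationary for the kernel `Π`. -/
theorem stmt6 (c : ℝ) (hc : 0 < c) :
    (∀ x, 0 ≤ statDens c x) ∧
    (∫ x, statDens c x = 1) ∧
    (∀ x, (∫ y, transDens c y x * statDens c y) = statDens c x) := by
  refine ⟨fun x => ?_, total c hc, fun x => ?_⟩
  · unfold statDens
    split_ifs <;> positivity
  · rcases lt_or_ge c x with h | h
    · exact stat_right c x hc h
    rcases le_or_gt (-c) x with h' | h'
    · exact stat_mid c x hc h' h
    · rw [← statDens_neg, ← stat_right c (-x) hc (by linarith),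
        ← integral_neg_eq_self (fun y => transDens c y (-x) * statDens c y)]
      simp only [transDens_neg c _ _ hc, statDens_neg]
end
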